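/- arXiv:1708.09512 — 2 statements merged into one kernel-verified Lean document; each statement's English description precedes it below -/
import Mathlib

section
/- Let r ≥ 1, let f(x) = g(x)·1{φ(x) ≥ 0} with g continuous and φ ∈ C^r(ℝ^d), let ρ be a strictly positive probability density on ℝ with E|f(x)| < ∞ (x having iid components with density ρ), fix j ∈ {1,…,d}, and assume (D_jφ)(x) > 0 for all x ∈ ℝ^d. Write y = x_{-j} and let ψ ∈ C^r(U_j) be the unique function with φ(ψ(y),y) = 0 on U_j. Then ℝ^{d-1} is the disjoint union of U_j, U_j^+ and U_j^-, the set {x ∈ ℝ^d : φ(x) ≥ 0} equals {x : x_{-j} ∈ U_j^+} ∪ {x : x_{-j} ∈ U_j and x_j ≥ ψ(x_{-j})}, and (P_j f)(y) = ∫_{-∞}^{∞} g(x_j,y)ρ(x_j) dx_j for y ∈ U_j^+, (P_j f)(y) = ∫_{ψ(y)}^{∞} g(x_j,y)ρ(x_j) dx_j for y ∈ U_j, and (P_j f)(y) = 0 for y ∈ U_j^-. -/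
/-!
For fixed `y = x_{-j}` the slice `t ↦ φ (t, y)` is differentiable with derivative `D_jφ > 0`, hence
continuous and strictly increasing (`strictMono_slice`). A continuous function on `ℝ` either has a
zero or keeps a constant strict sign, which gives the partition of `ℝ^{d-1}`. When there is a zero
it is `ψ y`, and monotonicity gives `0 ≤ φ (t, y) ↔ ψ y ≤ t` (`slice_nonneg_iff`). Everything
else follows by rewriting the indicator `1{φ ≥ 0}` along slices; the integral identities
are pointwise identities of integrands.
-/

open MeasureTheory Set Filter

/-- Partial derivative of `g` with respect to the `i`-th coordinate. -/
noncomputable def pD {ι : Type} [Fintype ι] [DecidableEq ι] (i : ι)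
    (g : (ι → ℝ) → ℝ) : (ι → ℝ) → ℝ :=
  fun x => fderiv ℝ g x (Pi.single i 1)

/-- Insert the value `t` at coordinate `j`, the remaining coordinates given by `y`. -/
def insj {d : ℕ} (j : Fin d) (t : ℝ) (y : {i : Fin d // i ≠ j} → ℝ) : Fin d → ℝ :=
  fun i => if h : i = j then t else y ⟨i, h⟩

/-- `U_j = {x_{-j} : φ(x_j, x_{-j}) = 0 for some x_j}`. -/
def Uj {d : ℕ} (j : Fin d) (φ : (Fin d → ℝ) → ℝ) : Set ({i : Fin d // i ≠ j} → ℝ) :=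
  {y | ∃ t : ℝ, φ (insj j t y) = 0}

/-- `U_j^+ = {x_{-j} : φ(x_j, x_{-j}) > 0 for all x_j}`. -/
def Ujp {d : ℕ} (j : Fin d) (φ : (Fin d → ℝ) → ℝ) : Set ({i : Fin d // i ≠ j} → ℝ) :=
  {y | ∀ t : ℝ, 0 < φ (insj j t y)}

/-- `U_j^- = {x_{-j} : φ(x_j, x_{-j}) < 0 for all x_j}`. -/
def Ujm {d : ℕ} (j : Fin d) (φ : (Fin d → ℝ) → ℝ) : Set ({i : Fin d // i ≠ j} → ℝ) :=
  {y | ∀ t : ℝ, φ (insj j t y) < 0}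

/-- `(P_j f)(x_{-j}) = ∫ f(x_j, x_{-j}) ρ(x_j) dx_j`. -/
noncomputable def Pj {d : ℕ} (j : Fin d) (ρ : ℝ → ℝ) (f : (Fin d → ℝ) → ℝ) :
    ({i : Fin d // i ≠ j} → ℝ) → ℝ :=
  fun y => ∫ t : ℝ, f (insj j t y) * ρ t

lemma hasDerivAt_insj {d : ℕ} (j : Fin d) (y : {i : Fin d // i ≠ j} → ℝ) (t : ℝ) :
    HasDerivAt (fun s => insj j s y) (Pi.single j 1) t := by
  rw [hasDerivAt_pi]
  intro i
  by_cases h : i = j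
  · subst h
    simpa [insj] using hasDerivAt_id' t
  · simpa [insj, h] using hasDerivAt_const t (y ⟨i, h⟩)

lemma insj_self {d : ℕ} (j : Fin d) (x : Fin d → ℝ) :
    insj j (x j) (fun i : {i : Fin d // i ≠ j} => x i.1) = x := by
  funext i
  by_cases h : i = j
  · subst h
    simp [insj]
  · simp [insj, h]

lemma hasDerivAt_slice {d : ℕ} (j : Fin d) {φ : (Fin d → ℝ) → ℝ} (hφ : Differentiable ℝ φ)
    (y : {i : Fin d // i ≠ j} → ℝ) (t : ℝ) :
    HasDerivAt (fun s => φ (insj j s y)) (pD j φ (insj j t y)) t :=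
  (hφ (insj j t y)).hasFDerivAt.comp_hasDerivAt t (hasDerivAt_insj j y t)

lemma strictMono_slice {d : ℕ} (j : Fin d) {φ : (Fin d → ℝ) → ℝ} (hφ : Differentiable ℝ φ)
    (hDj : ∀ x, 0 < pD j φ x) (y : {i : Fin d // i ≠ j} → ℝ) :
    StrictMono (fun s => φ (insj j s y)) :=
  strictMono_of_hasDerivAt_pos (fun t => hasDerivAt_slice j hφ y t) (fun _ => hDj _)

lemma slice_nonneg_iff {d : ℕ} (j : Fin d) {φ : (Fin d → ℝ) → ℝ} (hφ : Differentiable ℝ φ)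
    (hDj : ∀ x, 0 < pD j φ x) {y : {i : Fin d // i ≠ j} → ℝ} {s : ℝ}
    (hs : φ (insj j s y) = 0) (t : ℝ) : 0 ≤ φ (insj j t y) ↔ s ≤ t := by
  have h := (strictMono_slice j hφ hDj y).le_iff_le (a := s) (b := t)
  simpa only [hs] using h

/-- By the intermediate value theorem, a slice of a differentiable function has a zero or a
constant strict sign. -/
lemma mem_Uj_or {d : ℕ} (j : Fin d) {φ : (Fin d → ℝ) → ℝ} (hφ : Differentiable ℝ φ)
    (y : {i : Fin d // i ≠ j} → ℝ) : y ∈ Uj j φ ∨ y ∈ Ujp j φ ∨ y ∈ Ujm j φ := by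
  by_contra! h
  obtain ⟨h0, hp, hm⟩ := h
  simp only [Ujp, Ujm, mem_ofPred_eq, not_forall, not_lt] at hp hm
  obtain ⟨a, ha⟩ := hp
  obtain ⟨b, hb⟩ := hm
  have hc : Continuous (fun s => φ (insj j s y)) :=
    continuous_iff_continuousAt.2 fun t => (hasDerivAt_slice j hφ y t).continuousAt
  exact h0 (mem_range_of_exists_le_of_exists_ge hc ⟨a, ha⟩ ⟨b, hb⟩)

/-- structure of `{φ ≥ 0}` and the explicit form of `P_j f` for
`f = g·1{φ ≥ 0}` when `D_jφ > 0` everywhere. -/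
theorem stmt_5 {d r : ℕ} (hr : 1 ≤ r) (j : Fin d)
    (g φ f : (Fin d → ℝ) → ℝ) (hg : Continuous g) (hφ : ContDiff ℝ (r : ℕ∞) φ)
    (hf : ∀ x, f x = if 0 ≤ φ x then g x else 0)
    (ρ : ℝ → ℝ) (hρpos : ∀ t, 0 < ρ t) (hρint : Integrable ρ) (hρprob : ∫ t : ℝ, ρ t = 1)
    -- `E|f(x)| < ∞` where the components of `x` are iid with density `ρ`
    (hfint : Integrable (fun x : Fin d → ℝ => f x * ∏ i, ρ (x i)))
    -- `D_jφ > 0` everywhere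
    (hDj : ∀ x : Fin d → ℝ, 0 < pD j φ x)
    -- `ψ ∈ C^r(U_j)` is the (unique) function with `φ(ψ(y), y) = 0` on `U_j`
    (ψ : ({i : Fin d // i ≠ j} → ℝ) → ℝ)
    (hψ : ContDiffOn ℝ (r : ℕ∞) ψ (Uj j φ))
    (hψ0 : ∀ y ∈ Uj j φ, φ (insj j (ψ y) y) = 0) :
    -- `ℝ^{d-1}` is the disjoint union of `U_j`, `U_j^+`, `U_j^-`
    (Uj j φ ∪ Ujp j φ ∪ Ujm j φ = univ ∧
      Uj j φ ∩ Ujp j φ = ∅ ∧ Uj j φ ∩ Ujm j φ = ∅ ∧ Ujp j φ ∩ Ujm j φ = ∅) ∧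
    -- `{φ ≥ 0} = {x : x_{-j} ∈ U_j^+} ∪ {x : x_{-j} ∈ U_j, x_j ≥ ψ(x_{-j})}`
    {x : Fin d → ℝ | 0 ≤ φ x} =
      {x : Fin d → ℝ | (fun i : {i : Fin d // i ≠ j} => x i.1) ∈ Ujp j φ} ∪
      {x : Fin d → ℝ | (fun i : {i : Fin d // i ≠ j} => x i.1) ∈ Uj j φ ∧
        ψ (fun i : {i : Fin d // i ≠ j} => x i.1) ≤ x j} ∧
    -- the values of `P_j f` on the three pieces
    (∀ y ∈ Ujp j φ, Pj j ρ f y = ∫ t : ℝ, g (insj j t y) * ρ t) ∧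
    (∀ y ∈ Uj j φ, Pj j ρ f y = ∫ t in Ici (ψ y), g (insj j t y) * ρ t) ∧
    (∀ y ∈ Ujm j φ, Pj j ρ f y = 0) := by
  have hd : Differentiable ℝ φ := hφ.differentiable (by
    have : r ≠ 0 := by omega
    exact_mod_cast this)
  refine ⟨⟨?_, ?_, ?_, ?_⟩, ?_, ?_, ?_, ?_⟩
  · refine eq_univ_of_forall fun y => ?_
    rcases mem_Uj_or j hd y with h | h | h
    · exact Or.inl (Or.inl h)
    · exact Or.inl (Or.inr h)
    · exact Or.inr h
  · refine eq_empty_of_forall_notMem ?_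
    rintro y ⟨⟨t, ht⟩, h⟩
    exact (h t).ne' ht
  · refine eq_empty_of_forall_notMem ?_
    rintro y ⟨⟨t, ht⟩, h⟩
    exact (h t).ne ht
  · refine eq_empty_of_forall_notMem ?_
    rintro y ⟨hp, hm⟩
    exact lt_asymm (hp 0) (hm 0)
  · ext x
    have hx := insj_self j x
    simp only [mem_ofPred_eq, mem_union]
    constructor
    · intro h
      rcases mem_Uj_or j hd (fun i : {i : Fin d // i ≠ j} => x i.1) with h0 | hp | hm
      · exact Or.inr ⟨h0, (slice_nonneg_iff j hd hDj (hψ0 _ h0) (x j)).1 (by rwa [hx])⟩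
      · exact Or.inl hp
      · have := hm (x j)
        rw [hx] at this
        exact absurd h this.not_ge
    · rintro (hp | ⟨h0, hle⟩)
      · have := hp (x j)
        rw [hx] at this
        exact this.le
      · have := (slice_nonneg_iff j hd hDj (hψ0 _ h0) (x j)).2 hle
        rwa [hx] at this
  · intro y hy
    refine integral_congr_ae (Eventually.of_forall fun t => ?_)
    simp only [hf, if_pos (hy t).le]
  · intro y hy
    rw [← integral_indicator measurableSet_Ici]
    refine integral_congr_ae (Eventually.of_forall fun t => ?_)
    simp only [hf, slice_nonneg_iff j hd hDj (hψ0 y hy) t, indicator, mem_Ici, ite_mul, zero_mul]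
  · intro y hy
    simp only [Pj, hf, if_neg (hy _).not_ge, zero_mul, integral_zero]
end

section
/- Fix integers d ≥ 1, j ∈ {1,…,d}, and r ≥ 1. Let f(x) = g(x)·1{φ(x) ≥ 0} with g, φ ∈ C^r(ℝ^d). Assume: (Assumption 1) (D_jφ)(x) ≠ 0 for all x ∈ ℝ^d; (Assumption 2) there exist L > 0 and B_1,…,B_d ∈ (0,1) such that |(D^α g)(x)| ≤ L·∏_{i=1}^d min(Φ(x_i), 1−Φ(x_i))^{−B_i}, |(D^α φ)(x)| ≤ L·∏_{i=1}^d min(Φ(x_i), 1−Φ(x_i))^{−B_i}, and |(D_jφ)(x)|^{−b} ≤ L·∏_{i=1}^d min(Φ(x_i), 1−Φ(x_i))^{−B_i} for all x ∈ ℝ^d, all multi-indices α with |α| ≤ r, and all integers 1 ≤ b ≤ 2r−1; (Assumption 3) ρ ∈ C^{r-1}(ℝ) is a strictly positive probability density with CDF Φ, there exist B, L' > 0 with (dΦ⁻¹/du)(u) ≤ L'·min(u, 1−u)^{−1−B} for all u ∈ (0,1), and for every integer 0 ≤ c ≤ r−1 and every a ∈ (0,1), ρ^{(c)}(x)/(1−Φ(x))^a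 → 0 as x → ∞ and ρ^{(c)}(x)/Φ(x)^a → 0 as x → −∞. If B_j < 1/(2r+1), then P_j f ∈ C^r(ℝ^{d-1}). -/
/-!
Write `y = x_{-j}` and `w = min(Φ, 1 - Φ)`. Since `D_jφ` never vanishes, `φ(·, y)` is strictly
monotone with at most one zero `ψ(y)`, and `P_j f(y)` is the integral of `g(t, y) ρ(t)` over a
half-line ending at `ψ(y)`, or over `ℝ`, or over `∅`. Differentiation under the integral sign
together with the implicit function theorem gives, up to the sign of `D_jφ`,
`D_k ∫_{φ ≥ 0} p ρ = ∫_{φ ≥ 0} (D_k p) ρ ± (p D_kφ ρ / D_jφ)(ψ(y), y)`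
(`hasFDerivAt_superlevel_integral`), so that it remains to see that the boundary terms, extended by
zero to those `y` without a zero, are `C^{r-1}` (`contDiff_superlevel_integral`).

Boundary terms have the form `onZero j φ (p / (D_jφ)^{2m+1})`. Differentiating such a term once
along the hypersurface gives a term of the same form with `m + 1` in place of `m`, at the cost of
two more factors bounded by `w^{-B_j}`. The tail conditions give `|ρ^{(c)}| ≤ C w^a` for every
`a < 1`, and `B_j < 1/(2r+1)` allows an `a` exceeding `(2r+1) B_j`. Hence all the boundary terms up
to the required order are bounded by a positive power of `w(ψ(y))`, locally uniformly in `y`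
(`GrowthClass` keeps track of these exponents), and vanish in the limit when `ψ(y)` escapes to
infinity, which is the only way in which the zero can disappear (`continuous_onZero`). A mean value
argument (`hasFDerivAt_of_eq_zero_or`) upgrades this continuity to differentiability at the points
`y` without a zero (`contDiff_onZero`).
-/

open MeasureTheory Set Filter

/-- Mixed partial derivative `D^α g` for a multi-index `α`. -/
noncomputable def mD {ι : Type} [Fintype ι] [DecidableEq ι] (α : ι → ℕ)
    (g : (ι → ℝ) → ℝ) : (ι → ℝ) → ℝ :=
  (((Finset.univ : Finset ι).toList).flatMap (fun i => List.replicate (α i) i)).foldr pD g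

/-- The CDF `Φ(x) = ∫_{-∞}^x ρ(t) dt` of the density `ρ`. -/
noncomputable def cdf (ρ : ℝ → ℝ) : ℝ → ℝ := fun x => ∫ t in Iic x, ρ t
/-! ### The weight `min Φ (1 - Φ)` -/

/-- The weight `min (Φ t) (1 - Φ t)` in which all growth and decay is measured. -/
noncomputable def wt (ρ : ℝ → ℝ) (t : ℝ) : ℝ := min (cdf ρ t) (1 - cdf ρ t)

section Weight

variable {ρ : ℝ → ℝ}

lemma one_sub_cdf (hρint : Integrable ρ) (hρprob : ∫ t : ℝ, ρ t = 1) (t : ℝ) :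
    1 - cdf ρ t = ∫ s in Ioi t, ρ s := by
  rw [cdf, ← hρprob, ← integral_add_compl (measurableSet_Iic (a := t)) hρint, compl_Iic]
  ring

lemma cdf_pos (hρpos : ∀ t, 0 < ρ t) (hρint : Integrable ρ) (t : ℝ) : 0 < cdf ρ t := by
  rw [cdf, integral_pos_iff_support_of_nonneg (fun s => (hρpos s).le) hρint.integrableOn]
  have : Function.support ρ = univ := by ext s; simp [(hρpos s).ne']
  simp [this]

lemma one_sub_cdf_pos (hρpos : ∀ t, 0 < ρ t) (hρint : Integrable ρ)
    (hρprob : ∫ t : ℝ, ρ t = 1) (t : ℝ) : 0 < 1 - cdf ρ t := by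
  rw [one_sub_cdf hρint hρprob,
    integral_pos_iff_support_of_nonneg (fun s => (hρpos s).le) hρint.integrableOn]
  have : Function.support ρ = univ := by ext s; simp [(hρpos s).ne']
  simp [this]

lemma hasDerivAt_cdf (hρc : Continuous ρ) (hρint : Integrable ρ) (t : ℝ) :
    HasDerivAt (cdf ρ) (ρ t) t := by
  have h : cdf ρ = fun x => cdf ρ 0 + ∫ s in (0 : ℝ)..x, ρ s := by
    funext x
    rw [← intervalIntegral.integral_Iic_sub_Iic hρint.integrableOn hρint.integrableOn]
    simp [cdf]
  rw [h]
  exact (hρc.integral_hasStrictDerivAt 0 t).hasDerivAt.const_add _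

lemma continuous_cdf (hρc : Continuous ρ) (hρint : Integrable ρ) : Continuous (cdf ρ) :=
  continuous_iff_continuousAt.2 fun t => (hasDerivAt_cdf hρc hρint t).continuousAt

lemma continuous_wt (hρc : Continuous ρ) (hρint : Integrable ρ) : Continuous (wt ρ) := by
  have := continuous_cdf hρc hρint
  unfold wt
  fun_prop

lemma wt_pos (hρpos : ∀ t, 0 < ρ t) (hρint : Integrable ρ) (hρprob : ∫ t : ℝ, ρ t = 1)
    (t : ℝ) : 0 < wt ρ t :=
  lt_min (cdf_pos hρpos hρint t) (one_sub_cdf_pos hρpos hρint hρprob t)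

lemma wt_le_one (hρpos : ∀ t, 0 < ρ t) (hρint : Integrable ρ) (t : ℝ) : wt ρ t ≤ 1 :=
  (min_le_right _ _).trans (by linarith [cdf_pos hρpos hρint t])

lemma tendsto_cdf_atBot : Tendsto (cdf ρ) atBot (nhds 0) :=
  tendsto_integral_Iic_zero tendsto_id

lemma tendsto_one_sub_cdf_atTop (hρint : Integrable ρ) (hρprob : ∫ t : ℝ, ρ t = 1) :
    Tendsto (fun t => 1 - cdf ρ t) atTop (nhds 0) := by
  simp_rw [one_sub_cdf hρint hρprob]
  exact tendsto_integral_Ioi_zero tendsto_id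

lemma tendsto_wt (hρpos : ∀ t, 0 < ρ t) (hρint : Integrable ρ) (hρprob : ∫ t : ℝ, ρ t = 1) :
    Tendsto (wt ρ) (cocompact ℝ) (nhds 0) := by
  rw [cocompact_eq_atBot_atTop, tendsto_sup]
  have hw := fun t => (wt_pos hρpos hρint hρprob t).le
  exact ⟨squeeze_zero hw (fun t => min_le_left _ _) tendsto_cdf_atBot,
    squeeze_zero hw (fun t => min_le_right _ _) (tendsto_one_sub_cdf_atTop hρint hρprob)⟩

/-- If `F` is bounded with nonnegative continuous derivative `F'`, then `F'` is integrable. -/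
lemma integrable_of_bounded_primitive {F F' : ℝ → ℝ} (hF : ∀ t, HasDerivAt F (F' t) t)
    (hc : Continuous F') (h0 : ∀ t, 0 ≤ F' t) {C : ℝ} (hC : ∀ t, |F t| ≤ C) :
    Integrable F' := by
  refine integrable_of_intervalIntegral_norm_bounded (l := atTop) (a := fun n : ℝ => -n)
    (b := fun n : ℝ => n) (2 * C)
    (fun n => (hc.integrableOn_Icc).mono_set Ioc_subset_Icc_self)
    tendsto_neg_atTop_atBot tendsto_id (Eventually.of_forall fun n => ?_)
  have : ∀ t, ‖F' t‖ = F' t := fun t => by simp [abs_of_nonneg (h0 t)]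
  simp_rw [this]
  rw [intervalIntegral.integral_eq_sub_of_hasDerivAt (fun t _ => hF t)
    (hc.intervalIntegrable _ _)]
  have h1 := abs_le.1 (hC n)
  have h2 := abs_le.1 (hC (-n))
  linarith

lemma integrable_wt_rpow (hρc : Continuous ρ) (hρpos : ∀ t, 0 < ρ t) (hρint : Integrable ρ)
    (hρprob : ∫ t : ℝ, ρ t = 1) {b : ℝ} (hb : b ∈ Ioo (0 : ℝ) 1) :
    Integrable fun t => wt ρ t ^ (-b) * ρ t := by
  have hb1 : 0 < 1 - b := by linarith [hb.2]
  have p1 := cdf_pos hρpos hρint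
  have p2 := one_sub_cdf_pos hρpos hρint hρprob
  have cc := continuous_cdf hρc hρint
  have bd : ∀ u : ℝ, 0 < u → u < 1 → |u ^ (1 - b) / (1 - b)| ≤ 1 / (1 - b) := by
    intro u h0 h1
    rw [abs_of_nonneg (by positivity)]
    gcongr
    exact Real.rpow_le_one h0.le h1.le hb1.le
  -- `Φ^{-b} ρ` has the bounded primitive `Φ^{1-b} / (1-b)`, and similarly for `1 - Φ`
  have i1 : Integrable fun t => cdf ρ t ^ (-b) * ρ t := by
    refine integrable_of_bounded_primitive (F := fun t => cdf ρ t ^ (1 - b) / (1 - b))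
      (C := 1 / (1 - b)) (fun t => ?_) ?_ (fun t => ?_)
      (fun t => bd _ (p1 t) (by linarith [p2 t]))
    · refine (((hasDerivAt_cdf hρc hρint t).rpow_const (p := 1 - b)
        (Or.inl (p1 t).ne')).div_const (1 - b)).congr_deriv ?_
      rw [show 1 - b - 1 = -b by ring]
      field_simp
    · exact (cc.rpow_const fun t => Or.inl (p1 t).ne').mul hρc
    · exact mul_nonneg (Real.rpow_nonneg (p1 t).le _) (hρpos t).le
  have i2 : Integrable fun t => (1 - cdf ρ t) ^ (-b) * ρ t := by
    refine integrable_of_bounded_primitive (F := fun t => -((1 - cdf ρ t) ^ (1 - b) / (1 - b)))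
      (C := 1 / (1 - b)) (fun t => ?_) ?_ (fun t => ?_)
      (fun t => by rw [abs_neg]; exact bd _ (p2 t) (by linarith [p1 t]))
    · refine ((((hasDerivAt_cdf hρc hρint t).const_sub 1).rpow_const (p := 1 - b)
        (Or.inl (p2 t).ne')).div_const (1 - b)).neg.congr_deriv ?_
      rw [show 1 - b - 1 = -b by ring]
      field_simp
    · exact ((continuous_const.sub cc).rpow_const fun t => Or.inl (p2 t).ne').mul hρc
    · exact mul_nonneg (Real.rpow_nonneg (p2 t).le _) (hρpos t).le
  refine (i1.add i2).mono' ?_ (Eventually.of_forall fun t => ?_)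
  · exact (((continuous_wt hρc hρint).rpow_const
      fun t => Or.inl (wt_pos hρpos hρint hρprob t).ne').mul hρc).aestronglyMeasurable
  · have hw := wt_pos hρpos hρint hρprob t
    have h1 := mul_nonneg (Real.rpow_nonneg (p1 t).le (-b)) (hρpos t).le
    have h2 := mul_nonneg (Real.rpow_nonneg (p2 t).le (-b)) (hρpos t).le
    rw [Real.norm_of_nonneg (mul_nonneg (Real.rpow_nonneg hw.le _) (hρpos t).le)]
    simp only [Pi.add_apply]
    rcases min_choice (cdf ρ t) (1 - cdf ρ t) with h | h
    · rw [wt, h]; linarith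
    · rw [wt, h]; linarith

/-- A continuous function that vanishes at infinity relative to the powers of the two tails
is globally bounded by the corresponding power of the weight. -/
lemma le_wt_rpow_of_tails (hρc : Continuous ρ) (hρpos : ∀ t, 0 < ρ t) (hρint : Integrable ρ)
    (hρprob : ∫ t : ℝ, ρ t = 1) {u : ℝ → ℝ} (hu : Continuous u) {a : ℝ}
    (htop : Tendsto (fun x => u x / (1 - cdf ρ x) ^ a) atTop (nhds 0))
    (hbot : Tendsto (fun x => u x / cdf ρ x ^ a) atBot (nhds 0)) :
    ∃ C, 0 ≤ C ∧ ∀ t, |u t| ≤ C * wt ρ t ^ a := by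
  have p1 := cdf_pos hρpos hρint
  have p2 := one_sub_cdf_pos hρpos hρint hρprob
  have hw := wt_pos hρpos hρint hρprob
  have e1 : ∀ᶠ t in atBot, wt ρ t = cdf ρ t := by
    filter_upwards [(tendsto_cdf_atBot (ρ := ρ)).eventually_lt_const
      (show (0 : ℝ) < 1 / 2 by norm_num)] with t ht
    exact min_eq_left (by linarith)
  have e2 : ∀ᶠ t in atTop, wt ρ t = 1 - cdf ρ t := by
    filter_upwards [(tendsto_one_sub_cdf_atTop hρint hρprob).eventually_lt_const
      (show (0 : ℝ) < 1 / 2 by norm_num)] with t ht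
    exact min_eq_right (by linarith)
  have hq : Tendsto (fun t => u t / wt ρ t ^ a) (cocompact ℝ) (nhds 0) := by
    rw [cocompact_eq_atBot_atTop, tendsto_sup]
    exact ⟨hbot.congr' (e1.mono fun t h => by simp only [h]),
      htop.congr' (e2.mono fun t h => by simp only [h])⟩
  have hqc : Continuous fun t => u t / wt ρ t ^ a :=
    hu.div ((continuous_wt hρc hρint).rpow_const fun t => Or.inl (hw t).ne')
      fun t => (Real.rpow_pos_of_pos (hw t) a).ne'
  obtain ⟨C, hC⟩ := (ZeroAtInftyContinuousMap.mk ⟨_, hqc⟩ hq).isBounded_range.exists_norm_le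
  refine ⟨max C 0, le_max_right _ _, fun t => ?_⟩
  have h := hC _ (mem_range_self t)
  have h' : |u t / wt ρ t ^ a| ≤ C := h
  rw [abs_div, abs_of_pos (Real.rpow_pos_of_pos (hw t) a),
    div_le_iff₀ (Real.rpow_pos_of_pos (hw t) a)] at h'
  exact h'.trans (mul_le_mul_of_nonneg_right (le_max_left _ _) (Real.rpow_nonneg (hw t).le _))

end Weight
/-! ### Partial derivatives -/

section PartialDerivatives

variable {ι : Type} [Fintype ι] [DecidableEq ι]

lemma fderiv_apply_eq_sum_pD (p : (ι → ℝ) → ℝ) (x v : ι → ℝ) :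
    fderiv ℝ p x v = ∑ i, v i * pD i p x := by
  conv_lhs => rw [← Finset.univ_sum_single v]
  rw [map_sum]
  refine Finset.sum_congr rfl fun i _ => ?_
  rw [show (Pi.single i (v i) : ι → ℝ) = v i • Pi.single i 1 by
    rw [← Pi.single_smul, smul_eq_mul, mul_one], map_smul, smul_eq_mul, pD]

lemma contDiff_pD {n m : ℕ} {p : (ι → ℝ) → ℝ} (hp : ContDiff ℝ n p) (h : m + 1 ≤ n) (i : ι) :
    ContDiff ℝ m (pD i p) := by
  have : ContDiff ℝ m (fderiv ℝ p) := hp.fderiv_right (by exact_mod_cast h)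
  exact this.clm_apply contDiff_const

lemma pD_add {p q : (ι → ℝ) → ℝ} (hp : Differentiable ℝ p) (hq : Differentiable ℝ q) (i : ι) :
    pD i (fun x => p x + q x) = fun x => pD i p x + pD i q x := by
  funext x
  simp only [pD]
  rw [fderiv_fun_add (hp x) (hq x)]
  rfl

lemma pD_const_mul {p : (ι → ℝ) → ℝ} (hp : Differentiable ℝ p) (c : ℝ) (i : ι) :
    pD i (fun x => c * p x) = fun x => c * pD i p x := by
  funext x
  simp only [pD]
  rw [fderiv_const_mul (hp x)]
  rfl

lemma pD_mul {p q : (ι → ℝ) → ℝ} (hp : Differentiable ℝ p) (hq : Differentiable ℝ q) (i : ι) :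
    pD i (fun x => p x * q x) = fun x => pD i p x * q x + p x * pD i q x := by
  funext x
  simp only [pD]
  rw [fderiv_fun_mul (hp x) (hq x)]
  simp
  ring

lemma pD_comm {p : (ι → ℝ) → ℝ} (hp : ContDiff ℝ 2 p) (i k : ι) :
    pD i (pD k p) = pD k (pD i p) := by
  funext x
  have hd : Differentiable ℝ (fderiv ℝ p) :=
    (hp.fderiv_right (m := 1) (by norm_num)).differentiable (by norm_num)
  have key : ∀ a b : ι, pD a (pD b p) x
      = fderiv ℝ (fderiv ℝ p) x (Pi.single a 1) (Pi.single b 1) := by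
    intro a b
    have : HasFDerivAt (pD b p) _ x := (hd x).hasFDerivAt.clm_apply
      (hasFDerivAt_const (Pi.single b (1 : ℝ) : ι → ℝ) x)
    rw [pD, this.fderiv]
    simp
  rw [key, key]
  exact second_derivative_symmetric
    (fun y => (hp.differentiable (by norm_num) y).hasFDerivAt) (hd x).hasFDerivAt _ _

lemma contDiff_foldr_pD {p : (ι → ℝ) → ℝ} {n : ℕ} (hp : ContDiff ℝ n p) (l : List ι) :
    ∀ m : ℕ, l.length + m ≤ n → ContDiff ℝ m (l.foldr pD p) := by
  induction l with
  | nil => intro m hm; exact hp.of_le (by simpa using hm)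
  | cons a l ih =>
    intro m hm
    exact contDiff_pD (ih (m + 1) (by simp at hm; omega)) le_rfl a

lemma foldr_pD_perm {p : (ι → ℝ) → ℝ} {n : ℕ} (hp : ContDiff ℝ n p) {l l' : List ι}
    (h : l.Perm l') : l.length ≤ n → l.foldr pD p = l'.foldr pD p := by
  induction h with
  | nil => intro _; rfl
  | cons a _ ih =>
    intro hn
    simp only [List.length_cons] at hn
    rw [List.foldr_cons, List.foldr_cons, ih (by omega)]
  | swap a b l =>
    intro hn
    simp only [List.length_cons] at hn
    simp only [List.foldr_cons]
    exact pD_comm (contDiff_foldr_pD hp l 2 (by omega)) _ _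
  | trans h1 _ ih1 ih2 =>
    intro hn
    rw [ih1 hn, ih2 (h1.length_eq ▸ hn)]

lemma foldr_pD_eq_mD {p : (ι → ℝ) → ℝ} {n : ℕ} (hp : ContDiff ℝ n p) (l : List ι)
    (hl : l.length ≤ n) : l.foldr pD p = mD (fun i => l.count i) p := by
  refine foldr_pD_perm hp ?_ hl
  rw [List.perm_iff_count]
  intro a
  rw [List.count_flatMap]
  have : (List.count a ∘ fun i => List.replicate (List.count i l) i)
      = fun i => if i = a then l.count a else 0 := by
    funext i
    simp only [Function.comp, List.count_replicate, beq_iff_eq]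
    split_ifs with h
    · rw [h]
    · rfl
  rw [this, Finset.sum_map_toList]
  simp

lemma sum_count_eq_length (l : List ι) : ∑ i, l.count i = l.length := by
  simpa using Multiset.sum_count_eq_card (s := Finset.univ) (m := (l : Multiset ι)) (by simp)

end PartialDerivatives

/-! ### Functions whose derivatives have controlled growth in the `j`-th variable -/

section Growth

variable {d : ℕ}

/-- `p = O(w(x_j)^s)`, uniformly for the other variables in bounded sets. -/
def Growth (j : Fin d) (w : ℝ → ℝ) (s : ℝ) (p : (Fin d → ℝ) → ℝ) : Prop :=
  ∀ R : ℝ, ∃ C : ℝ, 0 ≤ C ∧ ∀ x : Fin d → ℝ, (∀ i, i ≠ j → |x i| ≤ R) →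
    |p x| ≤ C * w (x j) ^ s

/-- `p` is `C^k` and all its partial derivatives of order at most `k` satisfy `Growth j w s`. -/
def GrowthClass (j : Fin d) (w : ℝ → ℝ) : ℕ → ℝ → ((Fin d → ℝ) → ℝ) → Prop
  | 0, s, p => Continuous p ∧ Growth j w s p
  | k + 1, s, p => ContDiff ℝ 1 p ∧ Growth j w s p ∧ ∀ i, GrowthClass j w k s (pD i p)

variable {j : Fin d} {w : ℝ → ℝ}

lemma Growth.add {s : ℝ} {p q : (Fin d → ℝ) → ℝ} (hp : Growth j w s p) (hq : Growth j w s q) :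
    Growth j w s (fun x => p x + q x) := by
  intro R
  obtain ⟨C, hC, h⟩ := hp R
  obtain ⟨C', hC', h'⟩ := hq R
  refine ⟨C + C', by positivity, fun x hx => ?_⟩
  rw [add_mul]
  exact (abs_add_le _ _).trans (add_le_add (h x hx) (h' x hx))

lemma Growth.const_mul {s : ℝ} {p : (Fin d → ℝ) → ℝ} (hp : Growth j w s p) (c : ℝ) :
    Growth j w s (fun x => c * p x) := by
  intro R
  obtain ⟨C, hC, h⟩ := hp R
  refine ⟨|c| * C, by positivity, fun x hx => ?_⟩
  rw [abs_mul, mul_assoc]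
  exact mul_le_mul_of_nonneg_left (h x hx) (abs_nonneg _)

lemma Growth.mul (hw : ∀ t, 0 < w t) {s s' : ℝ} {p q : (Fin d → ℝ) → ℝ}
    (hp : Growth j w s p) (hq : Growth j w s' q) :
    Growth j w (s + s') (fun x => p x * q x) := by
  intro R
  obtain ⟨C, hC, h⟩ := hp R
  obtain ⟨C', hC', h'⟩ := hq R
  refine ⟨C * C', by positivity, fun x hx => ?_⟩
  rw [abs_mul, Real.rpow_add (hw _)]
  calc |p x| * |q x| ≤ (C * w (x j) ^ s) * (C' * w (x j) ^ s') :=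
        mul_le_mul (h x hx) (h' x hx) (abs_nonneg _)
          (mul_nonneg hC (Real.rpow_nonneg (hw _).le _))
    _ = _ := by ring

lemma GrowthClass.growth {k : ℕ} {s : ℝ} {p : (Fin d → ℝ) → ℝ} (hp : GrowthClass j w k s p) :
    Growth j w s p := by
  cases k with
  | zero => exact hp.2
  | succ k => exact hp.2.1

lemma GrowthClass.continuous {k : ℕ} {s : ℝ} {p : (Fin d → ℝ) → ℝ}
    (hp : GrowthClass j w k s p) : Continuous p := by
  cases k with
  | zero => exact hp.1
  | succ k => exact hp.1.continuous

lemma GrowthClass.differentiable {k : ℕ} {s : ℝ} {p : (Fin d → ℝ) → ℝ}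
    (hp : GrowthClass j w (k + 1) s p) : Differentiable ℝ p :=
  hp.1.differentiable (by norm_num)

lemma GrowthClass.of_succ {k : ℕ} {s : ℝ} {p : (Fin d → ℝ) → ℝ}
    (hp : GrowthClass j w (k + 1) s p) : GrowthClass j w k s p := by
  induction k generalizing p with
  | zero => exact ⟨hp.continuous, hp.growth⟩
  | succ k ih => exact ⟨hp.1, hp.2.1, fun i => ih (hp.2.2 i)⟩

lemma GrowthClass.mono {k k' : ℕ} (h : k ≤ k') {s : ℝ} {p : (Fin d → ℝ) → ℝ}
    (hp : GrowthClass j w k' s p) : GrowthClass j w k s p := by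
  induction h with
  | refl => exact hp
  | step _ ih => exact ih hp.of_succ

lemma GrowthClass.add {k : ℕ} {s : ℝ} {p q : (Fin d → ℝ) → ℝ}
    (hp : GrowthClass j w k s p) (hq : GrowthClass j w k s q) :
    GrowthClass j w k s (fun x => p x + q x) := by
  induction k generalizing p q with
  | zero => exact ⟨hp.1.add hq.1, hp.2.add hq.2⟩
  | succ k ih =>
    refine ⟨hp.1.add hq.1, hp.2.1.add hq.2.1, fun i => ?_⟩
    rw [pD_add hp.differentiable hq.differentiable]
    exact ih (hp.2.2 i) (hq.2.2 i)

lemma GrowthClass.const_mul {k : ℕ} {s : ℝ} {p : (Fin d → ℝ) → ℝ}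
    (hp : GrowthClass j w k s p) (c : ℝ) : GrowthClass j w k s (fun x => c * p x) := by
  induction k generalizing p with
  | zero => exact ⟨continuous_const.mul hp.1, hp.2.const_mul c⟩
  | succ k ih =>
    refine ⟨contDiff_const.mul hp.1, hp.2.1.const_mul c, fun i => ?_⟩
    rw [pD_const_mul hp.differentiable]
    exact ih (hp.2.2 i)

lemma GrowthClass.mul (hw : ∀ t, 0 < w t) {k : ℕ} {s s' : ℝ} {p q : (Fin d → ℝ) → ℝ}
    (hp : GrowthClass j w k s p) (hq : GrowthClass j w k s' q) :
    GrowthClass j w k (s + s') (fun x => p x * q x) := by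
  induction k generalizing p q with
  | zero => exact ⟨hp.1.mul hq.1, hp.2.mul hw hq.2⟩
  | succ k ih =>
    refine ⟨hp.1.mul hq.1, hp.2.1.mul hw hq.2.1, fun i => ?_⟩
    rw [pD_mul hp.differentiable hq.differentiable]
    exact (ih (hp.2.2 i) hq.of_succ).add (ih hp.of_succ (hq.2.2 i))

/-- Bounds on all `D^α p` with `|α| ≤ r` put `p` in the growth class, because mixed partial
derivatives may be taken in any order. -/
lemma growthClass_of_mD {r : ℕ} {s : ℝ} {p : (Fin d → ℝ) → ℝ} (hp : ContDiff ℝ r p)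
    (h : ∀ α : Fin d → ℕ, (∑ i, α i) ≤ r → Growth j w s (mD α p)) :
    GrowthClass j w r s p := by
  have main : ∀ (k : ℕ) (l : List (Fin d)), l.length + k ≤ r →
      GrowthClass j w k s (l.foldr pD p) := by
    intro k
    induction k with
    | zero =>
      intro l hl
      refine ⟨(contDiff_foldr_pD hp l 0 hl).continuous, ?_⟩
      rw [foldr_pD_eq_mD hp l hl]
      exact h _ (by rw [sum_count_eq_length]; exact hl)
    | succ k ih =>
      intro l hl
      refine ⟨(contDiff_foldr_pD hp l 1 (by omega)), ?_, fun i => ?_⟩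
      · rw [foldr_pD_eq_mD hp l (by omega)]
        exact h _ (by rw [sum_count_eq_length]; omega)
      · exact ih (i :: l) (by simp; omega)
  exact main r [] (by simp)

lemma growth_of_prod_bound (hw : ∀ t, 0 < w t) (hwc : Continuous w) {L : ℝ} (hL : 0 < L)
    {B : Fin d → ℝ} {p : (Fin d → ℝ) → ℝ} (h : ∀ x, |p x| ≤ L * ∏ i, w (x i) ^ (-(B i))) :
    Growth j w (-(B j)) p := by
  intro R
  have hb : ∀ i, ∃ M : ℝ, ∀ t : ℝ, |t| ≤ R → w t ^ (-(B i)) ≤ M := by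
    intro i
    have hc : Continuous fun t => w t ^ (-(B i)) := hwc.rpow_const fun t => Or.inl (hw t).ne'
    obtain ⟨M, hM⟩ := (isCompact_Icc (a := -R) (b := R)).bddAbove_image hc.continuousOn
    exact ⟨M, fun t ht => hM ⟨t, abs_le.1 ht, rfl⟩⟩
  choose M hM using hb
  refine ⟨L * ∏ i ∈ Finset.univ.erase j, |M i|, by positivity, fun x hx => (h x).trans ?_⟩
  rw [← Finset.mul_prod_erase Finset.univ _ (Finset.mem_univ j), mul_assoc,
    mul_comm (w (x j) ^ _)]
  refine mul_le_mul_of_nonneg_left (mul_le_mul_of_nonneg_right ?_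
    (Real.rpow_nonneg (hw _).le _)) hL.le
  exact Finset.prod_le_prod (fun i _ => Real.rpow_nonneg (hw _).le _) fun i hi =>
    (hM i _ (hx i (Finset.ne_of_mem_erase hi))).trans (le_abs_self _)

lemma pD_comp_eval {u : ℝ → ℝ} (hu : Differentiable ℝ u) (i : Fin d) :
    pD i (fun x : Fin d → ℝ => u (x j)) = fun x => (if i = j then 1 else 0) * deriv u (x j) := by
  funext x
  have h1 : HasFDerivAt (fun x : Fin d → ℝ => x j) (ContinuousLinearMap.proj j) x :=
    (ContinuousLinearMap.proj (R := ℝ) (φ := fun _ : Fin d => ℝ) j).hasFDerivAt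
  have h2 := (hu (x j)).hasDerivAt.comp_hasFDerivAt x h1
  have h3 : pD i (fun x : Fin d → ℝ => u (x j)) x
      = (deriv u (x j) • ContinuousLinearMap.proj (R := ℝ) (φ := fun _ : Fin d => ℝ) j)
        (Pi.single i 1) := by
    rw [pD, ← h2.fderiv]; rfl
  rw [h3]
  by_cases hij : i = j
  · subst hij; simp
  · simp [hij]

/-- A density with tail-controlled derivatives, viewed as a function of the `j`-th variable. -/
lemma growthClass_comp_eval {u : ℝ → ℝ} {n : ℕ} {s : ℝ} (hu : ContDiff ℝ n u)
    (h : ∀ c ≤ n, ∃ C, 0 ≤ C ∧ ∀ t, |iteratedDeriv c u t| ≤ C * w t ^ s) :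
    GrowthClass j w n s (fun x : Fin d → ℝ => u (x j)) := by
  have gr : ∀ c ≤ n, Growth j w s (fun x : Fin d → ℝ => iteratedDeriv c u (x j)) := by
    intro c hc R
    obtain ⟨C, hC, hb⟩ := h c hc
    exact ⟨C, hC, fun x _ => hb _⟩
  have main : ∀ k c : ℕ, c + k ≤ n →
      GrowthClass j w k s (fun x : Fin d → ℝ => iteratedDeriv c u (x j)) := by
    intro k
    induction k with
    | zero =>
      intro c hc
      exact ⟨(hu.continuous_iteratedDeriv c (by exact_mod_cast hc)).comp (continuous_apply j),
        gr c hc⟩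
    | succ k ih =>
      intro c hc
      have h1 : ContDiff ℝ 1 (iteratedDeriv c u) := by
        rw [iteratedDeriv_eq_iterate]
        exact ContDiff.iterate_deriv' 1 c (hu.of_le (by norm_cast; omega))
      refine ⟨h1.comp (contDiff_apply ℝ ℝ j), gr c (by omega), fun i => ?_⟩
      rw [pD_comp_eval (h1.differentiable (by norm_num))]
      simp_rw [← iteratedDeriv_succ]
      exact (ih (c + 1) (by omega)).const_mul _
  simpa using main n 0 (by simp)

end Growth
/-! ### Two general differentiability criteria -/

section Criteria

/-- The linear form on `ℝ^ι` with coefficients `c`. -/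
noncomputable def linForm {ι : Type} [Fintype ι] (c : ι → ℝ) : (ι → ℝ) →L[ℝ] ℝ :=
  ∑ k, c k • ContinuousLinearMap.proj (R := ℝ) (φ := fun _ : ι => ℝ) k

lemma linForm_apply {ι : Type} [Fintype ι] (c v : ι → ℝ) :
    linForm c v = ∑ k, c k * v k := by
  simp [linForm]

lemma contDiff_succ_of_linForm {ι : Type} [Fintype ι] {n : ℕ} {F : (ι → ℝ) → ℝ}
    {D : ι → (ι → ℝ) → ℝ} (hF : ∀ y, HasFDerivAt F (linForm fun k => D k y) y)
    (hD : ∀ k, ContDiff ℝ n (D k)) : ContDiff ℝ (n + 1 : ℕ) F := by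
  rw [Nat.cast_add, Nat.cast_one, contDiff_succ_iff_hasFDerivAt]
  refine ⟨_, ?_, hF⟩
  unfold linForm
  exact ContDiff.sum fun k _ => (hD k).smul contDiff_const

lemma continuous_linForm {ι X : Type} [Fintype ι] [TopologicalSpace X]
    {D : ι → X → ℝ} (hD : ∀ k, Continuous (D k)) :
    Continuous fun y => linForm fun k => D k y := by
  unfold linForm
  exact continuous_finsetSum _ fun k _ => (hD k).smul continuous_const

/-- Differentiability across the boundary of an open set: if `R` vanishes at `y₀`, and at every
nearby point either vanishes or has derivative `R'`, where `R'` is continuous and zero at `y₀`,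
then `R` has zero derivative at `y₀`. The mean value theorem is applied on the last part of the
segment from `y₀` to `y` on which `R` does not vanish. -/
lemma hasFDerivAt_of_eq_zero_or {E : Type*} [NormedAddCommGroup E] [NormedSpace ℝ E]
    {R : E → ℝ} {R' : E → E →L[ℝ] ℝ} {y₀ : E} (hc : Continuous R) (h0 : R y₀ = 0)
    (hR' : ContinuousAt R' y₀) (hR0 : R' y₀ = 0)
    (h : ∀ᶠ y in nhds y₀, R y = 0 ∨ HasFDerivAt R (R' y) y) :
    HasFDerivAt R (R' y₀) y₀ := by
  rw [hR0]
  refine HasFDerivAt.of_isLittleO ?_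
  rw [Asymptotics.isLittleO_iff]
  intro ε hε
  have h1 : ∀ᶠ y in nhds y₀, ‖R' y‖ < ε := by
    have := hR'.norm
    rw [ContinuousAt, hR0, norm_zero] at this
    exact this.eventually_lt_const hε
  obtain ⟨δ, hδ, hball⟩ := Metric.eventually_nhds_iff_ball.1 (h1.and h)
  filter_upwards [Metric.ball_mem_nhds y₀ hδ] with y hy
  simp only [h0, sub_zero, zero_apply]
  by_cases hRy : R y = 0
  · rw [hRy, norm_zero]; positivity
  let γ : ℝ → E := fun s => y₀ + s • (y - y₀)
  have hγc : Continuous γ := by fun_prop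
  have hγ1 : γ 1 = y := by simp [γ]
  have hγball : ∀ s ∈ Icc (0 : ℝ) 1, γ s ∈ Metric.ball y₀ δ := by
    intro s hs
    rw [Metric.mem_ball, dist_eq_norm] at hy ⊢
    simp only [γ, add_sub_cancel_left, norm_smul, Real.norm_eq_abs, abs_of_nonneg hs.1]
    exact (mul_le_of_le_one_left (norm_nonneg _) hs.2).trans_lt hy
  have hγd : ∀ s, HasDerivAt γ (y - y₀) s := by
    intro s
    simpa [γ] using ((hasDerivAt_id s).smul_const (y - y₀)).const_add y₀
  let u : ℝ → ℝ := fun s => R (γ s)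
  have huc : Continuous u := hc.comp hγc
  have hK : IsCompact (Icc (0 : ℝ) 1 ∩ u ⁻¹' {0}) :=
    isCompact_Icc.inter_right (isClosed_singleton.preimage huc)
  obtain ⟨s₀, ⟨hs₀, hus₀⟩, hmax⟩ := hK.exists_isGreatest ⟨0, by simp, by simp [u, γ, h0]⟩
  have hus₀' : u s₀ = 0 := hus₀
  have hs1 : s₀ < 1 := lt_of_le_of_ne hs₀.2 fun e => hRy (by
    rw [e] at hus₀'; simpa [u, hγ1] using hus₀')
  have hder : ∀ s ∈ Ioo s₀ 1, HasDerivAt u (R' (γ s) (y - y₀)) s := by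
    intro s hs
    have hsI : s ∈ Icc (0 : ℝ) 1 := ⟨hs₀.1.trans hs.1.le, hs.2.le⟩
    rcases (hball _ (hγball s hsI)).2 with h2 | h2
    · exact absurd (hmax ⟨hsI, h2⟩) (not_le.2 hs.1)
    · exact h2.comp_hasDerivAt s (hγd s)
  obtain ⟨c, hcI, hc'⟩ := exists_hasDerivAt_eq_slope u _ hs1 huc.continuousOn hder
  have hcb := (hball _ (hγball c ⟨hs₀.1.trans hcI.1.le, hcI.2.le⟩)).1
  have hu1 : u 1 = R y := by simp [u, hγ1]
  rw [hus₀', hu1, sub_zero, eq_div_iff (by linarith)] at hc'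
  rw [← hc', norm_mul]
  have e1 : ‖R' (γ c) (y - y₀)‖ ≤ ε * ‖y - y₀‖ :=
    ((R' (γ c)).le_opNorm _).trans (by gcongr)
  have e2 : ‖1 - s₀‖ ≤ 1 := by
    rw [Real.norm_of_nonneg (by linarith)]; linarith [hs₀.1]
  calc _ ≤ ε * ‖y - y₀‖ * 1 := mul_le_mul e1 e2 (norm_nonneg _) (by positivity)
    _ = _ := mul_one _

end Criteria

/-! ### The zero of `φ(·, y)` as a function of `y` -/

section Zero

variable {d : ℕ} {j : Fin d}

/-- `insj` as a continuous linear map of `(y, t)`. -/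
def insL (j : Fin d) : (({i : Fin d // i ≠ j} → ℝ) × ℝ) →L[ℝ] (Fin d → ℝ) :=
  ContinuousLinearMap.pi fun i =>
    if h : i = j then ContinuousLinearMap.snd ℝ _ ℝ
    else (ContinuousLinearMap.proj (R := ℝ) (φ := fun _ : {i : Fin d // i ≠ j} => ℝ) ⟨i, h⟩).comp
      (ContinuousLinearMap.fst ℝ _ ℝ)

lemma insL_apply (z : ({i : Fin d // i ≠ j} → ℝ) × ℝ) : insL j z = insj j z.2 z.1 := by
  funext i
  by_cases h : i = j <;> simp [insL, insj, h]

lemma continuous_insj :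
    Continuous fun z : ({i : Fin d // i ≠ j} → ℝ) × ℝ => insj j z.2 z.1 := by
  simp_rw [← insL_apply]
  exact (insL j).continuous

@[simp] lemma insj_self_s10 (t : ℝ) (y : {i : Fin d // i ≠ j} → ℝ) : insj j t y j = t := by
  simp [insj]

lemma insj_ne (t : ℝ) (y : {i : Fin d // i ≠ j} → ℝ) (i : {i : Fin d // i ≠ j}) :
    insj j t y i = y i := by
  simp [insj, i.2]

lemma fderiv_insj (p : (Fin d → ℝ) → ℝ) (x : Fin d → ℝ) (τ : ℝ)
    (v : {i : Fin d // i ≠ j} → ℝ) :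
    fderiv ℝ p x (insj j τ v) = τ * pD j p x + ∑ k : {i : Fin d // i ≠ j}, v k * pD k.1 p x := by
  rw [fderiv_apply_eq_sum_pD, Fintype.sum_eq_add_sum_subtype_ne _ j, insj_self_s10]
  simp_rw [insj_ne]

lemma hasFDerivAt_comp_insL {p : (Fin d → ℝ) → ℝ} (hp : Differentiable ℝ p)
    (z : ({i : Fin d // i ≠ j} → ℝ) × ℝ) :
    HasFDerivAt (fun z => p (insj j z.2 z.1)) ((fderiv ℝ p (insj j z.2 z.1)).comp (insL j)) z := by
  simp_rw [← insL_apply]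
  exact (hp _).hasFDerivAt.comp z (insL j).hasFDerivAt

lemma hasDerivAt_comp_insj {p : (Fin d → ℝ) → ℝ} (hp : Differentiable ℝ p)
    (y : {i : Fin d // i ≠ j} → ℝ) (t : ℝ) :
    HasDerivAt (fun t => p (insj j t y)) (pD j p (insj j t y)) t := by
  have h := (hasFDerivAt_comp_insL (j := j) hp (y, t)).comp_hasDerivAt t
    ((hasDerivAt_const t y).prodMk (hasDerivAt_id t))
  refine h.congr_deriv ?_
  rw [ContinuousLinearMap.comp_apply, insL_apply, fderiv_insj]
  simp

lemma hasFDerivAt_insj_right {p : (Fin d → ℝ) → ℝ} (hp : Differentiable ℝ p)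
    (y : {i : Fin d // i ≠ j} → ℝ) (t : ℝ) :
    HasFDerivAt (fun y => p (insj j t y)) (linForm fun k => pD k.1 p (insj j t y)) y := by
  have h0 : HasFDerivAt (𝕜 := ℝ) (fun y : {i : Fin d // i ≠ j} → ℝ => (y, t)) _ y :=
    (hasFDerivAt_id y).prodMk (hasFDerivAt_const t y)
  have h := (hasFDerivAt_comp_insL (j := j) hp (y, t)).comp y h0
  refine h.congr_fderiv ?_
  ext v
  rw [ContinuousLinearMap.comp_apply, ContinuousLinearMap.comp_apply, insL_apply, fderiv_insj,
    linForm_apply]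
  simp [mul_comm]

/-- `φ(·, y)` has a zero. -/
def HasZero (j : Fin d) (φ : (Fin d → ℝ) → ℝ) (y : {i : Fin d // i ≠ j} → ℝ) : Prop :=
  ∃ t, φ (insj j t y) = 0

open Classical in
/-- The zero of `φ(·, y)` if there is one (junk value `0` otherwise). -/
noncomputable def zeroOf (j : Fin d) (φ : (Fin d → ℝ) → ℝ) (y : {i : Fin d // i ≠ j} → ℝ) : ℝ :=
  if h : HasZero j φ y then h.choose else 0

open Classical in
/-- The restriction of `h` to the hypersurface `φ = 0`, as a function of `y = x_{-j}`, extended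
by zero to those `y` for which `φ(·, y)` has no zero. -/
noncomputable def onZero (j : Fin d) (φ h : (Fin d → ℝ) → ℝ) (y : {i : Fin d // i ≠ j} → ℝ) : ℝ :=
  if HasZero j φ y then h (insj j (zeroOf j φ y) y) else 0

variable {φ : (Fin d → ℝ) → ℝ}

lemma zeroOf_spec {y : {i : Fin d // i ≠ j} → ℝ} (h : HasZero j φ y) :
    φ (insj j (zeroOf j φ y) y) = 0 := by
  rw [zeroOf, dif_pos h]
  exact h.choose_spec

/-- By Rolle's theorem the zero is unique. -/
lemma zero_unique (hφ : Differentiable ℝ φ) (hDj : ∀ x, pD j φ x ≠ 0)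
    {y : {i : Fin d // i ≠ j} → ℝ} {t t' : ℝ} (hz : φ (insj j t y) = 0)
    (htz : φ (insj j t' y) = 0) : t = t' := by
  have key : ∀ a b : ℝ, φ (insj j a y) = 0 → φ (insj j b y) = 0 → ¬ a < b := by
    intro a b ha hb hab
    obtain ⟨c, -, hc⟩ := exists_hasDerivAt_eq_zero (f := fun t => φ (insj j t y)) hab
      (fun t _ => (hasDerivAt_comp_insj hφ y t).continuousAt.continuousWithinAt)
      (ha.trans hb.symm) (fun t _ => hasDerivAt_comp_insj hφ y t)
    exact hDj _ hc
  exact le_antisymm (not_lt.1 (key _ _ htz hz)) (not_lt.1 (key _ _ hz htz))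

/-- The implicit function theorem at a point of the zero set. -/
lemma zeroOf_local (hφ : ContDiff ℝ 1 φ) (hDj : ∀ x, pD j φ x ≠ 0)
    {y₀ : {i : Fin d // i ≠ j} → ℝ} (h₀ : HasZero j φ y₀) :
    (∀ᶠ y in nhds y₀, HasZero j φ y) ∧
    HasFDerivAt (zeroOf j φ) (linForm fun k => -(pD k.1 φ (insj j (zeroOf j φ y₀) y₀) /
      pD j φ (insj j (zeroOf j φ y₀) y₀))) y₀ := by
  have hφd : Differentiable ℝ φ := hφ.differentiable (by norm_num)
  set t₀ := zeroOf j φ y₀ with ht₀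
  set x₀ := insj j t₀ y₀ with hx₀
  have hz : φ x₀ = 0 := zeroOf_spec h₀
  let f : (({i : Fin d // i ≠ j} → ℝ) × ℝ) → ℝ := fun z => φ (insL j z)
  have hfu : f (y₀, t₀) = 0 := by simp only [f, insL_apply]; exact hz
  have dfu : HasStrictFDerivAt f ((fderiv ℝ φ x₀).comp (insL j)) (y₀, t₀) := by
    have e : insL j (y₀, t₀) = x₀ := insL_apply _
    have := (hφ.contDiffAt (x := insL j (y₀, t₀))).hasStrictFDerivAt (by norm_num)
    rw [e] at this
    exact HasStrictFDerivAt.comp (y₀, t₀) (e ▸ this) (insL j).hasStrictFDerivAt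
  set q := pD j φ x₀ with hq
  have hq0 : q ≠ 0 := hDj x₀
  have e2 : ((fderiv ℝ φ x₀).comp (insL j)) ∘L .inr ℝ ({i : Fin d // i ≠ j} → ℝ) ℝ
      = (ContinuousLinearEquiv.unitsEquivAut ℝ (Units.mk0 q hq0) : ℝ →L[ℝ] ℝ) := by
    ext
    simp only [ContinuousLinearMap.comp_apply, insL_apply, ContinuousLinearMap.inr_apply,
      fderiv_insj]
    simp [hq]
  have hinv : (((fderiv ℝ φ x₀).comp (insL j)) ∘L
      .inr ℝ ({i : Fin d // i ≠ j} → ℝ) ℝ).IsInvertible := ⟨_, e2.symm⟩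
  have hev := dfu.eventually_apply_implicitFunctionOfProdDomain hinv
  have hD := (dfu.hasStrictFDerivAt_implicitFunctionOfProdDomain hinv).hasFDerivAt
  simp only [hfu] at hev
  have hev' : ∀ᶠ y in nhds y₀, φ (insj j (dfu.implicitFunctionOfProdDomain hinv y) y) = 0 := by
    filter_upwards [hev] with y hy
    simpa only [f, insL_apply] using hy
  refine ⟨hev'.mono fun y hy => ⟨_, hy⟩, ?_⟩
  have heq : zeroOf j φ =ᶠ[nhds y₀] dfu.implicitFunctionOfProdDomain hinv :=
    hev'.mono fun y hy => zero_unique hφd hDj (zeroOf_spec ⟨_, hy⟩) hy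
  refine (hD.congr_of_eventuallyEq heq).congr_fderiv ?_
  ext v
  rw [e2, ContinuousLinearMap.inverse_equiv, linForm_apply]
  simp only [ContinuousLinearMap.comp_apply, neg_apply, insL_apply,
    ContinuousLinearMap.inl_apply, fderiv_insj]
  simp [← Finset.sum_neg_distrib]
  refine Finset.sum_congr rfl fun k _ => ?_
  field_simp

lemma onZero_of_hasZero {h : (Fin d → ℝ) → ℝ} {y : {i : Fin d // i ≠ j} → ℝ}
    (hy : HasZero j φ y) : onZero j φ h y = h (insj j (zeroOf j φ y) y) := if_pos hy

lemma onZero_of_not {h : (Fin d → ℝ) → ℝ} {y : {i : Fin d // i ≠ j} → ℝ}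
    (hy : ¬ HasZero j φ y) : onZero j φ h y = 0 := if_neg hy

lemma hasFDerivAt_onZero (hφ : ContDiff ℝ 1 φ) (hDj : ∀ x, pD j φ x ≠ 0)
    {h : (Fin d → ℝ) → ℝ} (hh : Differentiable ℝ h) {y₀ : {i : Fin d // i ≠ j} → ℝ}
    (h₀ : HasZero j φ y₀) :
    HasFDerivAt (onZero j φ h) (linForm fun k =>
      onZero j φ (fun x => pD k.1 h x - pD j h x * (pD k.1 φ x / pD j φ x)) y₀) y₀ := by
  obtain ⟨hev, hD⟩ := zeroOf_local hφ hDj h₀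
  have h1 := (hasFDerivAt_comp_insL (j := j) hh (y₀, zeroOf j φ y₀)).comp y₀
    ((hasFDerivAt_id y₀).prodMk hD)
  have heq : onZero j φ h =ᶠ[nhds y₀] fun y => h (insj j (zeroOf j φ y) y) :=
    hev.mono fun y hy => onZero_of_hasZero hy
  refine (HasFDerivAt.congr_of_eventuallyEq h1 heq).congr_fderiv ?_
  ext v
  simp only [ContinuousLinearMap.comp_apply, insL_apply, linForm_apply, onZero_of_hasZero h₀]
  rw [ContinuousLinearMap.prod_apply, fderiv_insj, linForm_apply, Finset.sum_mul,
    ← Finset.sum_add_distrib]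
  refine Finset.sum_congr rfl fun k _ => ?_
  simp only [ContinuousLinearMap.id_apply]
  ring

/-- Near a `y₀` without zero, every zero of `φ(·, y)` is far out, so `onZero h` is small. -/
lemma tendsto_onZero (hφ : Continuous φ) {w : ℝ → ℝ}
    (hw0 : Tendsto w (cocompact ℝ) (nhds 0)) {s : ℝ} (hs : 0 < s) {h : (Fin d → ℝ) → ℝ}
    (hh : Growth j w s h) {y₀ : {i : Fin d // i ≠ j} → ℝ} (h₀ : ¬ HasZero j φ y₀) :
    Tendsto (onZero j φ h) (nhds y₀) (nhds 0) := by
  obtain ⟨C, hC, hb⟩ := hh (‖y₀‖ + 1)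
  have hlim : Tendsto (fun t => C * w t ^ s) (cocompact ℝ) (nhds 0) := by
    have := (hw0.rpow_const (Or.inr hs.le)).const_mul C
    rwa [Real.zero_rpow hs.ne', mul_zero] at this
  rw [Metric.tendsto_nhds]
  intro ε hε
  obtain ⟨K, hK, hKs⟩ := mem_cocompact.1 (hlim.eventually_lt_const hε)
  have hfar : ∀ᶠ y in nhds y₀, ∀ t ∈ K, φ (insj j t y) ≠ 0 := by
    refine hK.eventually_forall_of_forall_eventually fun t _ => ?_
    have : Continuous fun z : ({i : Fin d // i ≠ j} → ℝ) × ℝ => φ (insj j z.2 z.1) :=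
      hφ.comp continuous_insj
    exact this.continuousAt.eventually_ne fun e => h₀ ⟨t, e⟩
  filter_upwards [hfar, Metric.ball_mem_nhds y₀ one_pos] with y hy hyb
  rw [dist_zero_right]
  by_cases hz : HasZero j φ y
  · rw [onZero_of_hasZero hz]
    have ht : zeroOf j φ y ∉ K := fun hm => hy _ hm (zeroOf_spec hz)
    have h1 : C * w (zeroOf j φ y) ^ s < ε := hKs ht
    refine lt_of_le_of_lt ?_ h1
    have := hb (insj j (zeroOf j φ y) y) fun i hi => ?_
    · simpa using this
    · rw [show insj j (zeroOf j φ y) y i = y ⟨i, hi⟩ from insj_ne _ _ ⟨i, hi⟩]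
      have h2 : ‖y‖ ≤ ‖y₀‖ + 1 := by
        rw [mem_ball_iff_norm] at hyb
        linarith [norm_le_norm_add_norm_sub' y y₀]
      exact (norm_le_pi_norm y _).trans h2
  · rw [onZero_of_not hz, norm_zero]; exact hε

lemma continuous_onZero (hφ : ContDiff ℝ 1 φ) (hDj : ∀ x, pD j φ x ≠ 0) {w : ℝ → ℝ}
    (hw0 : Tendsto w (cocompact ℝ) (nhds 0)) {s : ℝ} (hs : 0 < s) {h : (Fin d → ℝ) → ℝ}
    (hc : Continuous h) (hh : Growth j w s h) : Continuous (onZero j φ h) := by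
  rw [continuous_iff_continuousAt]
  intro y₀
  by_cases h₀ : HasZero j φ y₀
  · obtain ⟨hev, hD⟩ := zeroOf_local hφ hDj h₀
    have heq : onZero j φ h =ᶠ[nhds y₀] fun y => h (insj j (zeroOf j φ y) y) :=
      hev.mono fun y hy => onZero_of_hasZero hy
    refine ContinuousAt.congr ?_ heq.symm
    exact (hc.comp continuous_insj).continuousAt.comp
      (f := fun y => (y, zeroOf j φ y)) (continuousAt_id.prodMk hD.continuousAt)
  · rw [ContinuousAt, onZero_of_not h₀]
    exact tendsto_onZero hφ.continuous hw0 hs hh h₀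

end Zero
/-! ### Smoothness of boundary terms -/

section Boundary

variable {d : ℕ} {j : Fin d} {φ : (Fin d → ℝ) → ℝ} {w : ℝ → ℝ}

lemma pD_inv_pow {ι : Type} [Fintype ι] [DecidableEq ι] {q : (ι → ℝ) → ℝ}
    (hq : Differentiable ℝ q) (hq0 : ∀ x, q x ≠ 0) (n : ℕ) (i : ι) :
    pD i (fun x => (q x ^ (n + 1))⁻¹)
      = fun x => -((n + 1 : ℝ) * pD i q x) * (q x ^ (n + 2))⁻¹ := by
  funext x
  have h1 : HasDerivAt (fun s : ℝ => (s ^ (n + 1))⁻¹) _ (q x) :=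
    (hasDerivAt_pow (n + 1) (q x)).inv (pow_ne_zero _ (hq0 x))
  have h2 : HasFDerivAt (fun x => (q x ^ (n + 1))⁻¹) _ x :=
    h1.comp_hasFDerivAt x (hq x).hasFDerivAt
  have h0 := hq0 x
  rw [pD, h2.fderiv, pD]
  simp only [smul_apply, smul_eq_mul]
  push_cast
  field_simp
  ring

/-- Boundary terms have the form `p / (D_jφ)^{2m+1}` on `φ = 0`. Differentiating such a term along
the hypersurface replaces `m` by `m + 1`, at the cost of one order of smoothness of `p` and two
further factors `w^{-b}`; the exponent stays positive as long as `m ≤ N`, which makes all these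
terms and their derivatives tend to zero where the hypersurface escapes to infinity. -/
lemma contDiff_onZero (hφ : ContDiff ℝ 1 φ) (hDj : ∀ x, pD j φ x ≠ 0) (hw : ∀ t, 0 < w t)
    (hw0 : Tendsto w (cocompact ℝ) (nhds 0)) {N : ℕ} {a b : ℝ} (hb : 0 ≤ b)
    (hab : 0 < a - (2 * N + 3) * b) (hDφ : ∀ i, GrowthClass j w N (-b) (pD i φ))
    (hinv : ∀ m ≤ N, Growth j w (-b) (fun x => (pD j φ x ^ (2 * m + 1))⁻¹)) (k : ℕ) :
    ∀ (m : ℕ) (p : (Fin d → ℝ) → ℝ), m + k ≤ N →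
      GrowthClass j w k (a - (2 * m + 2) * b) p →
      ContDiff ℝ k (onZero j φ fun x => p x * (pD j φ x ^ (2 * m + 1))⁻¹) := by
  have hcont : ∀ (m : ℕ) (p : (Fin d → ℝ) → ℝ), m ≤ N → Continuous p →
      Growth j w (a - (2 * m + 2) * b) p →
      Continuous (onZero j φ fun x => p x * (pD j φ x ^ (2 * m + 1))⁻¹) := by
    intro m p hm hpc hp
    refine continuous_onZero hφ hDj hw0 ?_ ?_ (hp.mul hw (hinv m hm))
    · have : (m : ℝ) ≤ N := by exact_mod_cast hm
      nlinarith
    · exact hpc.mul (((hDφ j).continuous.pow _).inv₀ fun x => pow_ne_zero _ (hDj x))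
  induction k with
  | zero =>
    intro m p hm hp
    exact contDiff_zero.2 (hcont m p hm hp.1 hp.2)
  | succ k ih =>
    intro m p hm hp
    have hDφ1 : ∀ i, GrowthClass j w (k + 1) (-b) (pD i φ) :=
      fun i => (hDφ i).mono (by omega)
    have hDφ0 : ∀ i, GrowthClass j w k (-b) (pD i φ) := fun i => (hDφ i).mono (by omega)
    have hqd : Differentiable ℝ (pD j φ) := (hDφ1 j).differentiable
    have hpd := hp.differentiable
    have hid : Differentiable ℝ fun x => (pD j φ x ^ (2 * m + 1))⁻¹ :=
      (hqd.pow _).inv fun x => pow_ne_zero _ (hDj x)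
    -- the numerator of the derivative in direction `l` along the hypersurface
    let P : Fin d → (Fin d → ℝ) → ℝ := fun l x =>
      ((pD l p x * (pD j φ x * pD j φ x)
        + -(2 * m + 1 : ℝ) * (p x * (pD j φ x * pD l (pD j φ) x)))
        + (-1) * (pD j p x * (pD j φ x * pD l φ x)))
        + (2 * m + 1 : ℝ) * (p x * (pD j (pD j φ) x * pD l φ x))
    have hP : ∀ l, GrowthClass j w k (a - (2 * (m + 1 : ℕ) + 2) * b) (P l) := by
      intro l
      have e : a - (2 * ((m + 1 : ℕ) : ℝ) + 2) * b = (a - (2 * m + 2) * b) + (-b + -b) := by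
        push_cast; ring
      rw [e]
      exact (((((hp.2.2 l).mul hw ((hDφ0 j).mul hw (hDφ0 j))).add
        ((hp.of_succ.mul hw ((hDφ0 j).mul hw ((hDφ1 j).2.2 l))).const_mul _)).add
        (((hp.2.2 j).mul hw ((hDφ0 j).mul hw (hDφ0 l))).const_mul _))).add
        ((hp.of_succ.mul hw (((hDφ1 j).2.2 j).mul hw (hDφ0 l))).const_mul _)
    have hPD : ∀ l, (fun x => pD l (fun x => p x * (pD j φ x ^ (2 * m + 1))⁻¹) x
        - pD j (fun x => p x * (pD j φ x ^ (2 * m + 1))⁻¹) x * (pD l φ x / pD j φ x))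
        = fun x => P l x * (pD j φ x ^ (2 * (m + 1) + 1))⁻¹ := by
      intro l
      rw [pD_mul hpd hid, pD_mul hpd hid, pD_inv_pow hqd hDj, pD_inv_pow hqd hDj]
      funext x
      have h0 := hDj x
      simp only [P]
      push_cast
      field_simp
      ring
    obtain ⟨T, hT⟩ : ∃ T : {i : Fin d // i ≠ j} → ({i : Fin d // i ≠ j} → ℝ) → ℝ, ∀ l,
      T l = onZero j φ fun x => P l.1 x * (pD j φ x ^ (2 * (m + 1) + 1))⁻¹ := ⟨_, fun _ => rfl⟩
    have hsm : ∀ l, ContDiff ℝ k (T l) := fun l => by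
      rw [hT]
      exact ih (m + 1) (P l.1) (by omega) (hP l.1)
    have hT0 : ∀ y, ¬ HasZero j φ y → ∀ l, T l y = 0 := fun y hy l => by
      rw [hT, onZero_of_not hy]
    have hin : ∀ y, HasZero j φ y →
        HasFDerivAt (onZero j φ fun x => p x * (pD j φ x ^ (2 * m + 1))⁻¹)
          (linForm fun l => T l y) y := by
      intro y hy
      have := hasFDerivAt_onZero hφ hDj (hpd.mul hid) hy
      simp only [Pi.mul_def, hPD] at this
      simp only [hT]
      exact this
    have hc0 : Continuous (onZero j φ fun x => p x * (pD j φ x ^ (2 * m + 1))⁻¹) :=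
      hcont m p (by omega) hp.continuous hp.growth
    have hc1 : Continuous fun y => linForm fun l => T l y :=
      continuous_linForm fun l => (hsm l).continuous
    refine contDiff_succ_of_linForm (D := T) (fun y₀ => ?_) hsm
    by_cases h₀ : HasZero j φ y₀
    · exact hin y₀ h₀
    · refine hasFDerivAt_of_eq_zero_or (R' := fun y => linForm fun l => T l y)
        hc0 (onZero_of_not h₀) hc1.continuousAt ?_ (Eventually.of_forall fun y => ?_)
      · simp only [hT0 y₀ h₀]
        ext v
        simp [linForm_apply]
      · by_cases hy : HasZero j φ y
        · exact Or.inr (hin y hy)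
        · exact Or.inl (onZero_of_not hy)

end Boundary
/-! ### Differentiation of the integral -/

section Integral

variable {d : ℕ} {j : Fin d} {φ : (Fin d → ℝ) → ℝ} {w ρ : ℝ → ℝ} {b : ℝ}

/-- The set of `t` with `φ(t, y) ≥ 0`. -/
def superlevel (j : Fin d) (φ : (Fin d → ℝ) → ℝ) (y : {i : Fin d // i ≠ j} → ℝ) : Set ℝ :=
  {t | 0 ≤ φ (insj j t y)}

lemma continuous_insj_left (y : {i : Fin d // i ≠ j} → ℝ) : Continuous fun t => insj j t y :=
  continuous_insj.comp (continuous_const.prodMk continuous_id)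

lemma continuous_insj_right (t : ℝ) :
    Continuous fun y : {i : Fin d // i ≠ j} → ℝ => insj j t y :=
  continuous_insj.comp (continuous_id.prodMk continuous_const)

lemma measurableSet_superlevel (hφ : Continuous φ) (y : {i : Fin d // i ≠ j} → ℝ) :
    MeasurableSet (superlevel j φ y) :=
  (isClosed_le continuous_const (hφ.comp (continuous_insj_left y))).measurableSet

lemma Growth.integrand_bound (hρ : ∀ t, 0 < ρ t) {p : (Fin d → ℝ) → ℝ} (hp : Growth j w (-b) p)
    (y₀ : {i : Fin d // i ≠ j} → ℝ) :
    ∃ C, ∀ y ∈ Metric.ball y₀ 1, ∀ t, |p (insj j t y) * ρ t| ≤ C * (w t ^ (-b) * ρ t) := by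
  obtain ⟨C, -, hb⟩ := hp (‖y₀‖ + 1)
  refine ⟨C, fun y hy t => ?_⟩
  have h := hb (insj j t y) fun i hi => ?_
  · rw [insj_self_s10] at h
    rw [abs_mul, abs_of_pos (hρ t), ← mul_assoc]
    exact mul_le_mul_of_nonneg_right h (hρ t).le
  · rw [show insj j t y i = y ⟨i, hi⟩ from insj_ne _ _ ⟨i, hi⟩]
    have h2 : ‖y‖ ≤ ‖y₀‖ + 1 := by
      rw [mem_ball_iff_norm] at hy
      linarith [norm_le_norm_add_norm_sub' y y₀]
    exact (norm_le_pi_norm y _).trans h2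

lemma continuous_integrand (hρc : Continuous ρ) {p : (Fin d → ℝ) → ℝ} (hp : Continuous p)
    (y : {i : Fin d // i ≠ j} → ℝ) : Continuous fun t => p (insj j t y) * ρ t :=
  (hp.comp (continuous_insj_left y)).mul hρc

lemma integrable_integrand (hρ : ∀ t, 0 < ρ t) (hρc : Continuous ρ)
    (hI : Integrable fun t => w t ^ (-b) * ρ t) {p : (Fin d → ℝ) → ℝ} (hpc : Continuous p)
    (hp : Growth j w (-b) p) (y : {i : Fin d // i ≠ j} → ℝ) :
    Integrable fun t => p (insj j t y) * ρ t := by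
  obtain ⟨C, hC⟩ := hp.integrand_bound hρ y
  exact (hI.const_mul C).mono' (continuous_integrand hρc hpc y).aestronglyMeasurable
    (Eventually.of_forall fun t => hC y (Metric.mem_ball_self one_pos) t)

/-- Continuity of an integral over a set `S y` whose indicator is, for almost every `t`, locally
constant in `y`. -/
lemma continuous_setIntegral (hρ : ∀ t, 0 < ρ t) (hρc : Continuous ρ)
    (hI : Integrable fun t => w t ^ (-b) * ρ t) {p : (Fin d → ℝ) → ℝ} (hpc : Continuous p)
    (hp : Growth j w (-b) p) {S : ({i : Fin d // i ≠ j} → ℝ) → Set ℝ}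
    (hS : ∀ y, MeasurableSet (S y))
    (hloc : ∀ y₀, ∀ᵐ t, ∀ᶠ y in nhds y₀, (t ∈ S y ↔ t ∈ S y₀)) :
    Continuous fun y => ∫ t in S y, p (insj j t y) * ρ t := by
  simp_rw [← integral_indicator (hS _)]
  rw [continuous_iff_continuousAt]
  intro y₀
  obtain ⟨C, hC⟩ := hp.integrand_bound hρ y₀
  refine continuousAt_of_dominated (bound := fun t => C * (w t ^ (-b) * ρ t))
    (Eventually.of_forall fun y => ?_) ?_ (hI.const_mul C) ?_
  · exact (continuous_integrand hρc hpc y).aestronglyMeasurable.indicator (hS y)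
  · filter_upwards [Metric.ball_mem_nhds y₀ one_pos] with y hy
    refine Eventually.of_forall fun t => ?_
    exact (norm_indicator_le_norm_self _ _).trans (hC y hy t)
  · filter_upwards [hloc y₀] with t ht
    have hc : Continuous fun y => p (insj j t y) * ρ t :=
      (hpc.comp (continuous_insj_right t)).mul continuous_const
    by_cases h0 : t ∈ S y₀
    · refine hc.continuousAt.congr ?_
      filter_upwards [ht] with y hy
      rw [indicator_of_mem (hy.2 h0)]
    · refine (continuousAt_const (y := (0 : ℝ))).congr ?_
      filter_upwards [ht] with y hy
      rw [indicator_of_notMem fun h => h0 (hy.1 h)]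

lemma continuous_superlevel_integral (hφ : ContDiff ℝ 1 φ) (hDj : ∀ x, pD j φ x ≠ 0)
    (hρ : ∀ t, 0 < ρ t) (hρc : Continuous ρ)
    (hI : Integrable fun t => w t ^ (-b) * ρ t) {p : (Fin d → ℝ) → ℝ} (hpc : Continuous p)
    (hp : Growth j w (-b) p) :
    Continuous fun y => ∫ t in superlevel j φ y, p (insj j t y) * ρ t := by
  refine continuous_setIntegral hρ hρc hI hpc hp
    (measurableSet_superlevel hφ.continuous) fun y₀ => ?_
  have hsub : {t | φ (insj j t y₀) = 0}.Subsingleton := fun t ht t' ht' =>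
    zero_unique (hφ.differentiable (by norm_num)) hDj ht ht'
  have hnull : ∀ᵐ t : ℝ, φ (insj j t y₀) ≠ 0 := by
    rw [ae_iff]
    simpa using hsub.measure_zero volume
  filter_upwards [hnull] with t ht
  have hc : Continuous fun y => φ (insj j t y) := hφ.continuous.comp (continuous_insj_right t)
  rcases lt_or_gt_of_ne ht with h | h
  · filter_upwards [hc.continuousAt.eventually_lt_const h] with y hy
    simp [superlevel, not_le.2 h, not_le.2 hy]
  · filter_upwards [hc.continuousAt.eventually_const_lt h] with y hy
    simp [superlevel, h.le, hy.le]

/-- Differentiation under the integral sign, in terms of partial derivatives. -/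
lemma hasFDerivAt_integral_linForm {ι : Type} [Fintype ι] [DecidableEq ι] {μ : Measure ℝ}
    {u : (ι → ℝ) → ℝ → ℝ} {u' : ι → (ι → ℝ) → ℝ → ℝ} {y₀ : ι → ℝ} {bound : ι → ℝ → ℝ}
    (hum : ∀ y, AEStronglyMeasurable (u y) μ) (hui : Integrable (u y₀) μ)
    (hui' : ∀ k, Integrable (u' k y₀) μ)
    (hbd : ∀ k, ∀ y ∈ Metric.ball y₀ 1, ∀ t, |u' k y t| ≤ bound k t)
    (hbi : ∀ k, Integrable (bound k) μ)
    (hu : ∀ t, ∀ y, HasFDerivAt (fun y => u y t) (linForm fun k => u' k y t) y) :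
    HasFDerivAt (fun y => ∫ t, u y t ∂μ) (linForm fun k => ∫ t, u' k y₀ t ∂μ) y₀ := by
  have hi : ∀ k ∈ (Finset.univ : Finset ι), Integrable (fun t => u' k y₀ t •
      ContinuousLinearMap.proj (R := ℝ) (φ := fun _ : ι => ℝ) k) μ :=
    fun k _ => (hui' k).smul_const _
  have h1 : Integrable (fun t => linForm fun k => u' k y₀ t) μ := by
    have := integrable_finsetSum (f := fun k t => u' k y₀ t •
      ContinuousLinearMap.proj (R := ℝ) (φ := fun _ : ι => ℝ) k) _ hi
    exact this
  have h2 : ∀ᵐ t ∂μ, ∀ y ∈ Metric.ball y₀ 1, ‖linForm fun k => u' k y t‖ ≤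
      ∑ k, bound k t * ‖ContinuousLinearMap.proj (R := ℝ) (φ := fun _ : ι => ℝ) k‖ := by
    refine Eventually.of_forall fun t y hy => ?_
    refine (norm_sum_le _ _).trans (Finset.sum_le_sum fun k _ => ?_)
    rw [norm_smul]
    exact mul_le_mul_of_nonneg_right (hbd k y hy t) (norm_nonneg _)
  have h3 : Integrable (fun t => ∑ k, bound k t *
      ‖ContinuousLinearMap.proj (R := ℝ) (φ := fun _ : ι => ℝ) k‖) μ :=
    integrable_finsetSum _ fun k _ => (hbi k).mul_const _
  have h4 := hasFDerivAt_integral_of_dominated_of_fderiv_le (𝕜 := ℝ) (μ := μ) (F := u)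
    (F' := fun y t => linForm fun k => u' k y t) (Metric.ball_mem_nhds y₀ one_pos)
    (Eventually.of_forall hum) hui h1.aestronglyMeasurable h2 h3
    (Eventually.of_forall fun t y _ => hu t y)
  refine h4.congr_fderiv ?_
  unfold linForm
  rw [integral_finsetSum _ hi]
  exact Finset.sum_congr rfl fun k _ => integral_smul_const _ _

lemma hasFDerivAt_setIntegral (hρ : ∀ t, 0 < ρ t) (hρc : Continuous ρ)
    (hI : Integrable fun t => w t ^ (-b) * ρ t) {p : (Fin d → ℝ) → ℝ}
    (hp : GrowthClass j w 1 (-b) p) (S : Set ℝ) (y₀ : {i : Fin d // i ≠ j} → ℝ) :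
    HasFDerivAt (fun y => ∫ t in S, p (insj j t y) * ρ t)
      (linForm fun k => ∫ t in S, pD k.1 p (insj j t y₀) * ρ t) y₀ := by
  have hpd := hp.differentiable
  have hk : ∀ k : {i : Fin d // i ≠ j}, GrowthClass j w 0 (-b) (pD k.1 p) := fun k => hp.2.2 k.1
  choose C hC using fun k => (hk k).growth.integrand_bound hρ y₀
  refine hasFDerivAt_integral_linForm (u := fun y t => p (insj j t y) * ρ t)
    (u' := fun k y t => pD k.1 p (insj j t y) * ρ t)
    (bound := fun k t => C k * (w t ^ (-b) * ρ t))
    (fun y => (continuous_integrand hρc hp.continuous y).aestronglyMeasurable)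
    (integrable_integrand hρ hρc hI hp.continuous hp.growth y₀).integrableOn
    (fun k => (integrable_integrand hρ hρc hI (hk k).continuous (hk k).growth y₀).integrableOn)
    hC (fun k => (hI.const_mul (C k)).integrableOn) fun t y => ?_
  refine ((hasFDerivAt_insj_right hpd y t).mul_const (ρ t)).congr_fderiv ?_
  ext v
  simp only [smul_apply, linForm_apply, smul_eq_mul, Finset.mul_sum]
  exact Finset.sum_congr rfl fun k _ => by ring

lemma hasFDerivAt_moving_endpoint {E : Type*} [NormedAddCommGroup E] [NormedSpace ℝ E]
    {u : E × ℝ → ℝ} (hu : Continuous u) {ψ : E → ℝ} {ψ' : E →L[ℝ] ℝ} {y₀ : E}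
    (hψ : HasFDerivAt ψ ψ' y₀) :
    HasFDerivAt (fun y => ∫ t in (ψ y₀)..(ψ y), u (y, t)) (u (y₀, ψ y₀) • ψ') y₀ := by
  set c := u (y₀, ψ y₀) with hc
  have herr : HasFDerivAt (fun y => ∫ t in (ψ y₀)..(ψ y), (u (y, t) - c))
      (0 : E →L[ℝ] ℝ) y₀ := by
    refine HasFDerivAt.of_isLittleO ?_
    simp only [intervalIntegral.integral_same, sub_zero, zero_apply]
    refine Asymptotics.IsLittleO.trans_isBigO ?_ hψ.isBigO_sub
    rw [Asymptotics.isLittleO_iff]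
    intro ε hε
    obtain ⟨δ, hδ, hball⟩ := Metric.continuousAt_iff.1 (hu.continuousAt (x := (y₀, ψ y₀))) ε hε
    filter_upwards [Metric.ball_mem_nhds y₀ hδ,
      Metric.continuousAt_iff'.1 hψ.continuousAt δ hδ] with y hy1 hy2
    refine intervalIntegral.norm_integral_le_of_norm_le_const fun t ht => ?_
    have ht2 : dist t (ψ y₀) < δ := by
      refine lt_of_le_of_lt ?_ hy2
      rw [Real.dist_eq, Real.dist_eq]
      exact abs_sub_left_of_mem_uIcc (uIoc_subset_uIcc ht)
    have := hball (x := (y, t)) (by rw [Prod.dist_eq]; exact max_lt hy1 ht2)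
    rw [Real.dist_eq] at this
    exact this.le
  have h := herr.add ((hψ.sub_const (ψ y₀)).const_mul c)
  refine (h.congr_fderiv (zero_add _)).congr_of_eventuallyEq (Eventually.of_forall fun y => ?_)
  have hi : IntervalIntegrable (fun t => u (y, t)) volume (ψ y₀) (ψ y) :=
    (hu.comp (continuous_const.prodMk continuous_id)).intervalIntegrable _ _
  simp only [Pi.add_apply]
  rw [intervalIntegral.integral_sub hi intervalIntegrable_const,
    intervalIntegral.integral_const, smul_eq_mul]
  ring

/-- Without zeros, the sign of `φ(·, y)` is constant. -/
lemma nonneg_iff_of_not_hasZero (hφ : Continuous φ) {y : {i : Fin d // i ≠ j} → ℝ}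
    (hy : ¬ HasZero j φ y) (t : ℝ) : 0 ≤ φ (insj j t y) ↔ 0 ≤ φ (insj j 0 y) := by
  have hc : Continuous fun t => φ (insj j t y) := hφ.comp (continuous_insj_left y)
  have key : ∀ s s', 0 ≤ φ (insj j s y) → 0 ≤ φ (insj j s' y) := by
    intro s s' h
    by_contra h'
    obtain ⟨c, hc0⟩ := mem_range_of_exists_le_of_exists_ge hc ⟨s', (not_le.1 h').le⟩ ⟨s, h⟩
    exact hy ⟨c, hc0⟩
  exact ⟨key _ _, key _ _⟩

/-- The derivative of `y ↦ ∫_{φ(t,y) ≥ 0} p(t,y) ρ(t) dt` is the integral of the derivative plus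
a boundary term; `σ` is the constant sign of `D_jφ`. -/
lemma hasFDerivAt_superlevel_integral (hφ : ContDiff ℝ 1 φ) {σ : ℝ}
    (hσ : (σ = 1 ∧ ∀ x, 0 < pD j φ x) ∨ (σ = -1 ∧ ∀ x, pD j φ x < 0))
    (hρ : ∀ t, 0 < ρ t) (hρc : Continuous ρ)
    (hI : Integrable fun t => w t ^ (-b) * ρ t) {p : (Fin d → ℝ) → ℝ}
    (hp : GrowthClass j w 1 (-b) p)
    (hbc : ∀ k : {i : Fin d // i ≠ j}, Continuous
      (onZero j φ fun x => p x * pD k.1 φ x * ρ (x j) * (pD j φ x)⁻¹))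
    (y₀ : {i : Fin d // i ≠ j} → ℝ) :
    HasFDerivAt (fun y => ∫ t in superlevel j φ y, p (insj j t y) * ρ t)
      (linForm fun k => (∫ t in superlevel j φ y₀, pD k.1 p (insj j t y₀) * ρ t) +
        σ * onZero j φ (fun x => p x * pD k.1 φ x * ρ (x j) * (pD j φ x)⁻¹) y₀) y₀ := by
  have hDj : ∀ x, pD j φ x ≠ 0 := by
    rcases hσ with ⟨-, h⟩ | ⟨-, h⟩
    · exact fun x => (h x).ne'
    · exact fun x => (h x).ne
  have hφd : Differentiable ℝ φ := hφ.differentiable (by norm_num)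
  have hint := integrable_integrand hρ hρc hI hp.continuous hp.growth
  have hset := hasFDerivAt_setIntegral hρ hρc hI hp
  -- the case in which the hypersurface passes over `y`
  have hin : ∀ y₀, HasZero j φ y₀ →
      HasFDerivAt (fun y => ∫ t in superlevel j φ y, p (insj j t y) * ρ t)
      (linForm fun k => (∫ t in superlevel j φ y₀, pD k.1 p (insj j t y₀) * ρ t) +
        σ * onZero j φ (fun x => p x * pD k.1 φ x * ρ (x j) * (pD j φ x)⁻¹) y₀) y₀ := by
    intro y₀ h₀
    obtain ⟨hev, hψ⟩ := zeroOf_local hφ hDj h₀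
    have hm := hasFDerivAt_moving_endpoint
      (u := fun z : ({i : Fin d // i ≠ j} → ℝ) × ℝ => p (insj j z.2 z.1) * ρ z.2)
      ((hp.continuous.comp continuous_insj).mul (hρc.comp continuous_snd)) hψ
    have hsum := (hset (superlevel j φ y₀) y₀).add (hm.const_mul (-σ))
    have heq : ∀ y, HasZero j φ y → ∫ t in superlevel j φ y, p (insj j t y) * ρ t
        = (∫ t in superlevel j φ y₀, p (insj j t y) * ρ t)
          + -σ * ∫ t in (zeroOf j φ y₀)..(zeroOf j φ y), p (insj j t y) * ρ t := by
      intro y hy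
      rcases hσ with ⟨rfl, hpos⟩ | ⟨rfl, hneg⟩
      · have hS : ∀ y, HasZero j φ y → superlevel j φ y = Ici (zeroOf j φ y) := by
          intro y hy
          have hmono : StrictMono fun t => φ (insj j t y) :=
            strictMono_of_hasDerivAt_pos (fun t => hasDerivAt_comp_insj hφd y t)
              fun t => hpos _
          ext t
          have := hmono.le_iff_le (a := zeroOf j φ y) (b := t)
          simp only [zeroOf_spec hy] at this
          exact this
        rw [hS y hy, hS y₀ h₀, integral_Ici_eq_integral_Ioi, integral_Ici_eq_integral_Ioi,
          ← intervalIntegral.integral_Ioi_sub_Ioi' (hint y).integrableOn (hint y).integrableOn]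
        ring
      · have hS : ∀ y, HasZero j φ y → superlevel j φ y = Iic (zeroOf j φ y) := by
          intro y hy
          have hanti : StrictAnti fun t => φ (insj j t y) :=
            strictAnti_of_hasDerivAt_neg (fun t => hasDerivAt_comp_insj hφd y t)
              fun t => hneg _
          ext t
          have := hanti.le_iff_ge (a := zeroOf j φ y) (b := t)
          simp only [zeroOf_spec hy] at this
          exact this
        rw [hS y hy, hS y₀ h₀,
          ← intervalIntegral.integral_Iic_sub_Iic (hint y).integrableOn (hint y).integrableOn]
        ring
    refine (HasFDerivAt.congr_of_eventuallyEq hsum (hev.mono heq)).congr_fderiv ?_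
    ext v
    simp only [add_apply, smul_apply, linForm_apply, smul_eq_mul, Finset.mul_sum,
      onZero_of_hasZero h₀, insj_self_s10, ← Finset.sum_add_distrib]
    refine Finset.sum_congr rfl fun k _ => ?_
    rw [div_eq_mul_inv]
    ring
  by_cases h₀ : HasZero j φ y₀
  · exact hin y₀ h₀
  -- otherwise the integral over the fixed set `superlevel j φ y₀` is subtracted; the difference
  -- vanishes at all nearby `y` without zero
  let A : ({i : Fin d // i ≠ j} → ℝ) → ℝ := fun y =>
    ∫ t in superlevel j φ y₀, p (insj j t y) * ρ t
  let R : ({i : Fin d // i ≠ j} → ℝ) → ℝ := fun y =>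
    (∫ t in superlevel j φ y, p (insj j t y) * ρ t) - A y
  let A' : ({i : Fin d // i ≠ j} → ℝ) → ({i : Fin d // i ≠ j} → ℝ) →L[ℝ] ℝ := fun y =>
    linForm fun k => ∫ t in superlevel j φ y₀, pD k.1 p (insj j t y) * ρ t
  let G : ({i : Fin d // i ≠ j} → ℝ) → ({i : Fin d // i ≠ j} → ℝ) →L[ℝ] ℝ := fun y =>
    linForm fun k => (∫ t in superlevel j φ y, pD k.1 p (insj j t y) * ρ t) +
        σ * onZero j φ (fun x => p x * pD k.1 φ x * ρ (x j) * (pD j φ x)⁻¹) y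
  have hfix : ∀ q : (Fin d → ℝ) → ℝ, Continuous q → Growth j w (-b) q →
      Continuous fun y => ∫ t in superlevel j φ y₀, q (insj j t y) * ρ t := fun q hq hq' =>
    continuous_setIntegral hρ hρc hI hq hq'
      (fun _ => measurableSet_superlevel hφ.continuous y₀)
      (fun _ => Eventually.of_forall fun t => Eventually.of_forall fun y => Iff.rfl)
  have hRc : Continuous R :=
    (continuous_superlevel_integral hφ hDj hρ hρc hI hp.continuous hp.growth).sub
      (hfix p hp.continuous hp.growth)
  have hA'c : Continuous A' :=
    continuous_linForm fun k => hfix _ (hp.2.2 k.1).continuous (hp.2.2 k.1).growth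
  have hGc : Continuous G := continuous_linForm fun k =>
    (continuous_superlevel_integral hφ hDj hρ hρc hI (hp.2.2 k.1).continuous
      (hp.2.2 k.1).growth).add (continuous_const.mul (hbc k))
  have hGA : G y₀ = A' y₀ := by
    simp only [G, A', onZero_of_not h₀, mul_zero, add_zero]
  have hR : HasFDerivAt R ((fun y => G y - A' y) y₀) y₀ := by
    refine hasFDerivAt_of_eq_zero_or hRc (sub_self _) (hGc.sub hA'c).continuousAt
      (by rw [Pi.sub_apply, hGA, sub_self]) ?_
    have hne : φ (insj j 0 y₀) ≠ 0 := fun e => h₀ ⟨0, e⟩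
    have hc : Continuous fun y : {i : Fin d // i ≠ j} → ℝ => φ (insj j 0 y) :=
      hφ.continuous.comp (continuous_insj_right 0)
    have hsign : ∀ᶠ y in nhds y₀, (0 ≤ φ (insj j 0 y) ↔ 0 ≤ φ (insj j 0 y₀)) := by
      rcases lt_or_gt_of_ne hne with h | h
      · filter_upwards [hc.continuousAt.eventually_lt_const h] with y hy
        simp [not_le.2 h, not_le.2 hy]
      · filter_upwards [hc.continuousAt.eventually_const_lt h] with y hy
        simp [h.le, hy.le]
    filter_upwards [hsign] with y hy
    by_cases hz : HasZero j φ y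
    · exact Or.inr ((hin y hz).sub (hset _ y))
    · left
      have : superlevel j φ y = superlevel j φ y₀ := by
        ext t
        simp only [superlevel, mem_ofPred_eq]
        rw [nonneg_iff_of_not_hasZero hφ.continuous hz, hy,
          ← nonneg_iff_of_not_hasZero hφ.continuous h₀]
      simp only [R, A, this, sub_self]
  have hfin := hR.add (hset (superlevel j φ y₀) y₀)
  refine (hfin.congr_fderiv (show _ = G y₀ from ?_)).congr_of_eventuallyEq
    (Eventually.of_forall fun y => ?_)
  · exact sub_add_cancel (G y₀) (A' y₀)
  · simp only [R, A, Pi.add_apply, sub_add_cancel]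

end Integral

/-! ### Smoothness of the projection -/

/-- The derivative formula for the integral over `superlevel`, iterated: `N + 1` is the number of
derivatives available, and `2N + 3` factors `w^{-b}` are controlled by the decay `w^a` of `ρ`. -/
lemma contDiff_superlevel_integral {d : ℕ} {j : Fin d} {φ : (Fin d → ℝ) → ℝ} {w ρ : ℝ → ℝ}
    {N : ℕ} {a b : ℝ} (hφ : ContDiff ℝ 1 φ) (hDj : ∀ x, pD j φ x ≠ 0) (hw : ∀ t, 0 < w t)
    (hw0 : Tendsto w (cocompact ℝ) (nhds 0)) (hb : 0 ≤ b) (hab : 0 < a - (2 * N + 3) * b)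
    (hDφ : ∀ i, GrowthClass j w N (-b) (pD i φ))
    (hinv : ∀ m ≤ N, Growth j w (-b) (fun x => (pD j φ x ^ (2 * m + 1))⁻¹))
    (hρ : ∀ t, 0 < ρ t) (hρc : Continuous ρ) (hI : Integrable fun t => w t ^ (-b) * ρ t)
    (hρg : GrowthClass j w N a (fun x : Fin d → ℝ => ρ (x j))) (k : ℕ) :
    ∀ p : (Fin d → ℝ) → ℝ, k ≤ N + 1 → GrowthClass j w k (-b) p →
      ContDiff ℝ k (fun y => ∫ t in superlevel j φ y, p (insj j t y) * ρ t) := by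
  -- `D_jφ` has constant sign
  obtain ⟨σ, hσ⟩ : ∃ σ : ℝ, (σ = 1 ∧ ∀ x, 0 < pD j φ x) ∨ (σ = -1 ∧ ∀ x, pD j φ x < 0) := by
    have hc : Continuous (pD j φ) := (hDφ j).continuous
    by_cases h : ∃ x, 0 ≤ pD j φ x
    · refine ⟨1, Or.inl ⟨rfl, fun x => ?_⟩⟩
      by_contra h'
      obtain ⟨z, hz⟩ := mem_range_of_exists_le_of_exists_ge hc ⟨x, not_lt.1 h'⟩ h
      exact hDj z hz
    · push Not at h
      exact ⟨-1, Or.inr ⟨rfl, h⟩⟩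
  induction k with
  | zero =>
    intro p _ hp
    exact contDiff_zero.2 (continuous_superlevel_integral hφ hDj hρ hρc hI hp.1 hp.2)
  | succ k ih =>
    intro p hk hp
    have hbd : ∀ l : {i : Fin d // i ≠ j}, ContDiff ℝ k
        (onZero j φ fun x => p x * pD l.1 φ x * ρ (x j) * (pD j φ x)⁻¹) := by
      intro l
      have hcl : GrowthClass j w k (a - (2 * (0 : ℕ) + 2) * b)
          (fun x => p x * pD l.1 φ x * ρ (x j)) := by
        have h := (hp.of_succ.mul hw ((hDφ l.1).mono (by omega))).mul hw (hρg.mono (by omega))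
        rwa [show -b + -b + a = a - (2 * (0 : ℕ) + 2) * b by push_cast; ring] at h
      simpa using contDiff_onZero hφ hDj hw hw0 hb hab hDφ hinv k 0 _ (by omega) hcl
    refine contDiff_succ_of_linForm
      (hasFDerivAt_superlevel_integral hφ hσ hρ hρc hI (hp.mono (by omega))
        fun l => (hbd l).continuous) fun l => ?_
    exact (ih _ (by omega) (hp.2.2 l.1)).add (contDiff_const.mul (hbd l))

/-- under Assumptions 1, 2 and 3, if `B_j < 1/(2r+1)` then
`P_j f ∈ C^r(ℝ^{d-1})`. -/
theorem stmt_10 {d r : ℕ} (hd : 1 ≤ d) (hr : 1 ≤ r) (j : Fin d)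
    (g φ f : (Fin d → ℝ) → ℝ)
    (hg : ContDiff ℝ (r : ℕ∞) g) (hφ : ContDiff ℝ (r : ℕ∞) φ)
    (hf : ∀ x, f x = if 0 ≤ φ x then g x else 0)
    (ρ : ℝ → ℝ)
    -- Assumption 1: `D_jφ` never vanishes
    (hDj : ∀ x : Fin d → ℝ, pD j φ x ≠ 0)
    -- Assumption 2: growth conditions with constants `L > 0`, `B_i ∈ (0,1)`
    (L : ℝ) (hL : 0 < L) (B : Fin d → ℝ) (hB : ∀ i, B i ∈ Ioo (0 : ℝ) 1)
    (hgrowth_g : ∀ α : Fin d → ℕ, (∑ i, α i) ≤ r → ∀ x, |mD α g x| ≤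
      L * ∏ i, min (cdf ρ (x i)) (1 - cdf ρ (x i)) ^ (-(B i)))
    (hgrowth_φ : ∀ α : Fin d → ℕ, (∑ i, α i) ≤ r → ∀ x, |mD α φ x| ≤
      L * ∏ i, min (cdf ρ (x i)) (1 - cdf ρ (x i)) ^ (-(B i)))
    (hgrowth_Dj : ∀ b : ℕ, 1 ≤ b → b ≤ 2 * r - 1 → ∀ x, |pD j φ x| ^ (-(b : ℝ)) ≤
      L * ∏ i, min (cdf ρ (x i)) (1 - cdf ρ (x i)) ^ (-(B i)))
    -- Assumption 3: `ρ ∈ C^{r-1}` strictly positive probability density with a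
    -- quantile-derivative bound and tail conditions
    (hρsmooth : ContDiff ℝ ((r - 1 : ℕ) : ℕ∞) ρ)
    (hρpos : ∀ t, 0 < ρ t) (hρint : Integrable ρ) (hρprob : ∫ t : ℝ, ρ t = 1)
    (Finv : ℝ → ℝ) (hFinv : ∀ u ∈ Ioo (0 : ℝ) 1, cdf ρ (Finv u) = u)
    (B' L' : ℝ) (hB' : 0 < B') (hL' : 0 < L')
    (hquant : ∀ u ∈ Ioo (0 : ℝ) 1, 1 / ρ (Finv u) ≤ L' * min u (1 - u) ^ (-1 - B'))
    (htail_top : ∀ c : ℕ, c ≤ r - 1 → ∀ a ∈ Ioo (0 : ℝ) 1,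
      Tendsto (fun x => iteratedDeriv c ρ x / (1 - cdf ρ x) ^ a) atTop (nhds 0))
    (htail_bot : ∀ c : ℕ, c ≤ r - 1 → ∀ a ∈ Ioo (0 : ℝ) 1,
      Tendsto (fun x => iteratedDeriv c ρ x / (cdf ρ x) ^ a) atBot (nhds 0))
    -- the condition `B_j < 1/(2r+1)`
    (hBj : B j < 1 / (2 * r + 1)) :
    ContDiff ℝ (r : ℕ∞) (Pj j ρ f) := by
  obtain ⟨N, rfl⟩ : ∃ N, r = N + 1 := ⟨r - 1, by omega⟩
  simp only [Nat.add_sub_cancel] at hρsmooth htail_top htail_bot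
  have hρs : ContDiff ℝ (N : ℕ) ρ := by exact_mod_cast hρsmooth
  have hgs : ContDiff ℝ (N + 1 : ℕ) g := by exact_mod_cast hg
  have hφs : ContDiff ℝ (N + 1 : ℕ) φ := by exact_mod_cast hφ
  have hφ1 : ContDiff ℝ 1 φ := hφs.of_le (by exact_mod_cast Nat.le_add_left 1 N)
  have hρc := hρs.continuous
  have hw := wt_pos hρpos hρint hρprob
  have hwc := continuous_wt hρc hρint
  have hb := (hB j).1
  have hlt : (2 * (N : ℝ) + 3) * B j < 1 := by
    rw [lt_div_iff₀ (by positivity)] at hBj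
    push_cast at hBj
    linarith
  have hpos : 0 < (2 * (N : ℝ) + 3) * B j := by positivity
  -- any exponent `a` strictly between `(2r + 1) B_j` and `1` will do
  obtain ⟨a, ha, ha1⟩ := exists_between hlt
  have hgc : GrowthClass j (wt ρ) (N + 1) (-(B j)) g :=
    growthClass_of_mD hgs fun α hα => growth_of_prod_bound hw hwc hL (hgrowth_g α hα)
  have hφc : GrowthClass j (wt ρ) (N + 1) (-(B j)) φ :=
    growthClass_of_mD hφs fun α hα => growth_of_prod_bound hw hwc hL (hgrowth_φ α hα)
  have hinv : ∀ m ≤ N, Growth j (wt ρ) (-(B j)) (fun x => (pD j φ x ^ (2 * m + 1))⁻¹) := by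
    intro m hm
    refine growth_of_prod_bound hw hwc hL fun x => ?_
    have h := hgrowth_Dj (2 * m + 1) (by omega) (by omega) x
    rwa [Real.rpow_neg (abs_nonneg _), Real.rpow_natCast, ← abs_pow, ← abs_inv] at h
  have hρg : GrowthClass j (wt ρ) N a (fun x : Fin d → ℝ => ρ (x j)) :=
    growthClass_comp_eval hρs fun c hc =>
      le_wt_rpow_of_tails hρc hρpos hρint hρprob
        (hρs.continuous_iteratedDeriv c (by exact_mod_cast hc))
        (htail_top c hc a ⟨hpos.trans ha, ha1⟩) (htail_bot c hc a ⟨hpos.trans ha, ha1⟩)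
  have hP : Pj j ρ f = fun y => ∫ t in superlevel j φ y, g (insj j t y) * ρ t := by
    funext y
    rw [← integral_indicator (measurableSet_superlevel hφ1.continuous y)]
    refine integral_congr_ae (Eventually.of_forall fun t => ?_)
    by_cases h : 0 ≤ φ (insj j t y)
    · simp [hf, superlevel, h]
    · simp [hf, superlevel, h]
  rw [hP]
  have hmain := contDiff_superlevel_integral hφ1 hDj hw (tendsto_wt hρpos hρint hρprob) hb.le
    (sub_pos.2 ha) hφc.2.2 hinv hρpos hρc (integrable_wt_rpow hρc hρpos hρint hρprob (hB j))
    hρg (N + 1) g le_rfl hgc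
  exact_mod_cast hmain
end
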